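/- arXiv:2303.14424 — 3 statements merged into one kernel-verified Lean document; each statement's English description precedes it below -/
import Mathlib

section
/- Under the action of the octic group on reinsertion sets, the 25 reinsertion sets {I(r) : r a pure 4-OPT reinsertion scheme} are partitioned into exactly 7 orbits. -/
/-- A 4-OPT reinsertion scheme is encoded as a triple of signed integers
`(s₁p₁, s₂p₂, s₃p₃)` where `(p₁,p₂,p₃)` is a permutation of `(2,3,4)`
and each sign is `+` or `−`. -/
abbrev Scheme := ℤ × ℤ × ℤ

/-- The two possible signs. -/
def signsF : Finset ℤ := {1, -1}

/-- The six permutations of `(2,3,4)`. -/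
def permsF : Finset (ℤ × ℤ × ℤ) := {(2,3,4), (2,4,3), (3,2,4), (3,4,2), (4,2,3), (4,3,2)}

/-- All 48 reinsertion schemes. -/
def allSchemes : Finset Scheme :=
  ((signsF ×ˢ signsF ×ˢ signsF) ×ˢ permsF).image
    (fun x => (x.1.1 * x.2.1, x.1.2.1 * x.2.2.1, x.1.2.2 * x.2.2.2))

/-- The 8 schemes with a fixed underlying permutation `(p.1, p.2.1, p.2.2)`,
obtained by choosing the three signs freely. -/
def schemesOfPerm (p : ℤ × ℤ × ℤ) : Finset Scheme :=
  (signsF ×ˢ signsF ×ˢ signsF).image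
    (fun s => (s.1 * p.1, s.2.1 * p.2.1, s.2.2 * p.2.2))

/-- A scheme `(e₁,e₂,e₃)` is pure if its first entry is not `+2`, its last entry is
not `+4`, and no two consecutive entries are of the form `+t, +(t+1)` or `−t, −(t−1)`. -/
def IsPure (e : Scheme) : Prop :=
  e.1 ≠ 2 ∧ e.2.2 ≠ 4 ∧
  ¬ (0 < e.1 ∧ 0 < e.2.1 ∧ e.2.1 = e.1 + 1) ∧
  ¬ (e.1 < 0 ∧ e.2.1 < 0 ∧ e.2.1 = e.1 + 1) ∧
  ¬ (0 < e.2.1 ∧ 0 < e.2.2 ∧ e.2.2 = e.2.1 + 1) ∧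
  ¬ (e.2.1 < 0 ∧ e.2.2 < 0 ∧ e.2.2 = e.2.1 + 1)

instance : DecidablePred IsPure := fun e => by unfold IsPure; infer_instance

/-- A label is a pair `(l, p)` where `l ∈ ZMod 4` stands for the segment index
(`1,2,3` and `0` standing for `4`) and `p` tells whether the label is primed. -/
abbrev Label := ZMod 4 × Bool

/-- Entry label of the oriented segment `e` (`e = +l` or `e = -l`):
`+l` has entry `(l⊖1)'` and `−l` has entry `l` (plain). -/
def entryL (e : ℤ) : Label :=
  if 0 < e then ((e : ZMod 4) - 1, true) else (-(e : ZMod 4), false)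

/-- Exit label of the oriented segment `e`:
`+l` has exit `l` (plain) and `−l` has exit `(l⊖1)'`. -/
def exitL (e : ℤ) : Label :=
  if 0 < e then ((e : ZMod 4), false) else (-(e : ZMod 4) - 1, true)

/-- The reinsertion set `I(r)` of a scheme `r = (e₁,e₂,e₃)`: joining exits to entries
along the cyclic sequence of oriented segments `(+1, e₁, e₂, e₃)`. -/
def reins (r : Scheme) : Finset (Sym2 Label) :=
  {s(exitL 1, entryL r.1), s(exitL r.1, entryL r.2.1),
   s(exitL r.2.1, entryL r.2.2), s(exitL r.2.2, entryL 1)}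

/-- The action of the octic group (the dihedral group of order 8) on labels:
the rotation `ρ^i` adds `i` to the segment index, and the reflections `ψρ^i`
negate/shift the index and toggle priming (`ψ`, i.e. `sr 0`, maps `(l,p)` to
`(σ l, ¬p)` where `σ` swaps `1 ↔ 3` and fixes `2` and `4`). -/
def actL : DihedralGroup 4 → Label → Label
  | DihedralGroup.r i, x => (x.1 + i, x.2)
  | DihedralGroup.sr i, x => (i - x.1, !x.2)

/-- The induced action on reinsertion sets (elementwise on unordered pairs). -/
def actSet (φ : DihedralGroup 4) (I : Finset (Sym2 Label)) : Finset (Sym2 Label) :=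
  I.image (Sym2.map (actL φ))

/-- The orbit of a reinsertion set under the octic group. -/
def orbitOf (I : Finset (Sym2 Label)) : Finset (Finset (Sym2 Label)) :=
  (Finset.univ : Finset (DihedralGroup 4)).image (fun φ => actSet φ I)

/-!
The octic group acts simply transitively on the eight labels, so the position of a label `y`
seen from a label `x`, that is, where `y` lands once `x` has been carried to a fixed origin, is
invariant under the group. Hence so is the multiset of the relative positions of the joined pairs
of a reinsertion set. This invariant takes seven different values on seven reinsertion sets, and
the symmetries carry these seven onto all the reinsertion sets of pure schemes: the 25 pure
schemes fall into classes of sizes 2, 4, 8, 4, 4, 2 and 1.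
-/

open DihedralGroup (r sr)

theorem actL_one (x : Label) : actL 1 x = x := by
  simp only [DihedralGroup.one_def, actL, add_zero]

/- With Mathlib's convention `r i * sr j = sr (j - i)` for products in `DihedralGroup`, `actL` is a
right action. -/
theorem actL_mul (g h : DihedralGroup 4) (x : Label) : actL (g * h) x = actL h (actL g x) := by
  rcases g with i | i <;> rcases h with j | j <;> ext <;> simp [actL] <;> ring

theorem actL_injective (g : DihedralGroup 4) : Function.Injective (actL g) :=
  Function.LeftInverse.injective (g := actL g⁻¹) fun x => by
    rw [← actL_mul, mul_inv_cancel, actL_one]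

theorem actSet_one (I : Finset (Sym2 Label)) : actSet 1 I = I := by
  have h : actL 1 = id := funext actL_one
  rw [actSet, h, Sym2.map_id, Finset.image_id]

theorem actSet_mul (g h : DihedralGroup 4) (I : Finset (Sym2 Label)) :
    actSet (g * h) I = actSet h (actSet g I) := by
  have hgh : actL (g * h) = actL h ∘ actL g := funext (actL_mul g h)
  simp only [actSet, Finset.image_image, hgh, Sym2.map_comp]

theorem mem_orbitOf {I J : Finset (Sym2 Label)} : J ∈ orbitOf I ↔ ∃ g, actSet g I = J := by
  simp [orbitOf]

theorem self_mem_orbitOf (I : Finset (Sym2 Label)) : I ∈ orbitOf I :=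
  mem_orbitOf.2 ⟨1, actSet_one I⟩

theorem orbitOf_actSet (g : DihedralGroup 4) (I : Finset (Sym2 Label)) :
    orbitOf (actSet g I) = orbitOf I := by
  ext J
  simp only [mem_orbitOf, ← actSet_mul]
  exact ((Group.mulLeft_bijective g).surjective.exists (p := fun h => actSet h I = J)).symm

/-- The element of the octic group carrying the label `x` to the origin `(0, false)`; it is unique,
since the action on labels is simply transitive. -/
def toOrigin (x : Label) : DihedralGroup 4 :=
  if x.2 then sr x.1 else r (-x.1)

theorem mul_toOrigin_actL (g : DihedralGroup 4) (x : Label) :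
    g * toOrigin (actL g x) = toOrigin x := by
  rcases g with i | i <;> rcases x with ⟨l, _ | _⟩ <;> simp [toOrigin, actL]

/-- The position of the label `y` seen from the label `x`: where `y` lands when `x` is carried to
the origin. -/
def relPos (x y : Label) : Label :=
  actL (toOrigin x) y

theorem relPos_actL (g : DihedralGroup 4) (x y : Label) :
    relPos (actL g x) (actL g y) = relPos x y := by
  rw [relPos, ← actL_mul, mul_toOrigin_actL, relPos]

/-- The type of an unordered pair of labels: the relative positions of its two members, each seen
from the other. -/
def pairType : Sym2 Label → Sym2 Label :=
  Sym2.lift ⟨fun x y => s(relPos x y, relPos y x), fun _ _ => Sym2.eq_swap⟩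

theorem pairType_map_actL (g : DihedralGroup 4) (p : Sym2 Label) :
    pairType (p.map (actL g)) = pairType p := by
  induction p with
  | h x y => simp only [pairType, Sym2.map_mk, Sym2.lift_mk, relPos_actL]

/-- The profile of a set of pairs of labels: the multiset of the types of its pairs. It is an
invariant of the octic group. -/
def profile (I : Finset (Sym2 Label)) : Multiset (Sym2 Label) :=
  I.val.map pairType

theorem profile_actSet (g : DihedralGroup 4) (I : Finset (Sym2 Label)) :
    profile (actSet g I) = profile I := by
  have hinj : Set.InjOn (Sym2.map (actL g)) I := (Sym2.map.injective (actL_injective g)).injOn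
  rw [profile, actSet, Finset.image_val_of_injOn hinj, Multiset.map_map, profile]
  exact Multiset.map_congr rfl fun p _ => pairType_map_actL g p

theorem profile_eq_of_orbitOf_eq {I J : Finset (Sym2 Label)} (h : orbitOf I = orbitOf J) :
    profile I = profile J := by
  obtain ⟨g, rfl⟩ := mem_orbitOf.1 (h ▸ self_mem_orbitOf I)
  exact profile_actSet g J

/-- One pure scheme from each of the seven classes. -/
def representative : Fin 7 → Scheme :=
  ![(-2, 3, -4), (-2, -3, -4), (-2, 4, 3), (-2, 4, -3), (-2, -4, 3), (-3, -4, 2), (4, 3, 2)]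

/-- The members of the seven classes of pure schemes. Each comes with a symmetry carrying the
reinsertion set of the representative to its own. -/
def members : Fin 7 → Finset (DihedralGroup 4 × Scheme) :=
  ![{(r 0, (-2, 3, -4)), (r 1, (-4, 3, -2))},
    {(r 0, (-2, -3, -4)), (r 1, (4, 3, -2)), (r 2, (4, -3, 2)), (r 3, (-4, 3, 2))},
    {(r 0, (-2, 4, 3)), (r 1, (4, 2, -3)), (r 2, (3, -4, 2)), (r 3, (-4, -2, -3)),
      (sr 0, (-3, 4, 2)), (sr 1, (3, 2, -4)), (sr 2, (-3, -4, -2)), (sr 3, (4, -2, 3))},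
    {(r 0, (-2, 4, -3)), (r 1, (-4, 2, -3)), (sr 0, (-3, 4, -2)), (sr 1, (-3, 2, -4))},
    {(r 0, (-2, -4, 3)), (r 1, (3, -2, -4)), (r 2, (3, -4, -2)), (r 3, (-4, -2, 3))},
    {(r 0, (-3, -4, 2)), (r 1, (4, -2, -3))},
    {(r 0, (4, 3, 2))}]

theorem representative_mem_members (i : Fin 7) : (r 0, representative i) ∈ members i := by
  decide +revert

theorem filter_isPure_eq_biUnion_members :
    allSchemes.filter IsPure = Finset.univ.biUnion fun i => (members i).image Prod.snd := by
  decide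

theorem actSet_reins_representative :
    ∀ i, ∀ m ∈ members i, actSet m.1 (reins (representative i)) = reins m.2 := by
  decide

/-- The type of a pair joining two plain or two primed labels whose segment indices differ by
`d` or `-d`. -/
def likePair (d : ZMod 4) : Sym2 Label := s((d, false), (-d, false))

/-- The type of a pair joining a plain label `l` to the primed label `(l + d)'`. -/
def mixedPair (d : ZMod 4) : Sym2 Label := s((d, true), (d, true))

/-- The profiles of the seven representatives. -/
def representativeProfile : Fin 7 → Multiset (Sym2 Label) :=
  ![{likePair 1, likePair 1, likePair 1, likePair 1},
    {likePair 1, likePair 1, mixedPair 2, mixedPair 2},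
    {likePair 1, likePair 2, mixedPair 1, mixedPair 2},
    {likePair 1, likePair 1, likePair 2, likePair 2},
    {likePair 1, likePair 1, mixedPair 1, mixedPair 1},
    {likePair 2, likePair 2, mixedPair 2, mixedPair 2},
    {mixedPair 2, mixedPair 2, mixedPair 2, mixedPair 2}]

theorem profile_reins_representative (i : Fin 7) :
    profile (reins (representative i)) = representativeProfile i := by
  decide +revert

theorem representativeProfile_injective : Function.Injective representativeProfile := by
  decide

theorem orbitOf_reins_representative_injective :
    Function.Injective fun i => orbitOf (reins (representative i)) := fun i j h => by
  have hprofile := profile_eq_of_orbitOf_eq h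
  rw [profile_reins_representative, profile_reins_representative] at hprofile
  exact representativeProfile_injective hprofile

theorem orbitOf_reins_of_mem_members {i : Fin 7} {m : DihedralGroup 4 × Scheme}
    (hm : m ∈ members i) : orbitOf (reins m.2) = orbitOf (reins (representative i)) := by
  rw [← actSet_reins_representative i m hm, orbitOf_actSet]

theorem image_orbitOf_reins_members (i : Fin 7) :
    (members i).image (fun m => orbitOf (reins m.2)) = {orbitOf (reins (representative i))} := by
  rw [Finset.image_congr fun m hm => orbitOf_reins_of_mem_members hm]
  exact Finset.image_const ⟨_, representative_mem_members i⟩ _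

/-- The 25 reinsertion sets of the pure 4-OPT reinsertion schemes are partitioned
into exactly 7 orbits under the action of the octic group. -/
theorem seven_orbits :
    ((allSchemes.filter IsPure).image (fun e => orbitOf (reins e))).card = 7 := by
  have himage : (allSchemes.filter IsPure).image (fun e => orbitOf (reins e)) =
      Finset.univ.image fun i => orbitOf (reins (representative i)) := by
    simp only [filter_isPure_eq_biUnion_members, Finset.biUnion_image, Finset.image_image,
      Function.comp_def, image_orbitOf_reins_members, Finset.biUnion_singleton]
  rw [himage, Finset.card_image_of_injective _ orbitOf_reins_representative_injective,
    Finset.card_univ, Fintype.card_fin]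
end

section
/- For every n ≥ 8, every complete selection S = (i₁,i₂,i₃,i₄) on the tour T, and every pure 4-OPT reinsertion scheme r, the graph on vertex set ℤ/nℤ with edge set (E(T) \ R(S)) ∪ I_S(r) is a Hamiltonian cycle. -/
/-- The edges of the tour `0 → 1 → ⋯ → (n−1) → 0` on `ZMod n`. -/
def tourEdges (n : ℕ) : Set (Sym2 (ZMod n)) := {e | ∃ v : ZMod n, e = s(v, v + 1)}

/-- A complete selection: indices `0 ≤ i₁ < i₂ < i₃ < i₄ ≤ n − 1` such that no
`i_h + 1 (mod n)` is again a selection index. -/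
structure CompleteSelection (n : ℕ) where
  i : Fin 4 → ℕ
  mono : StrictMono i
  le : i 3 ≤ n - 1
  complete : ∀ h k : Fin 4, (i h + 1) % n ≠ i k

/-- The removal set `R(S)` of a selection, as edges of `ZMod n`. -/
def removalSet {n : ℕ} (S : CompleteSelection n) : Finset (Sym2 (ZMod n)) :=
  Finset.univ.image (fun k : Fin 4 => s(((S.i k : ZMod n)), (S.i k : ZMod n) + 1))

/-- Instantiation of a label at a selection: label `l` becomes the vertex `i_l`
and label `l'` becomes the vertex `i_l + 1 (mod n)`. -/
def instLabel {n : ℕ} (S : CompleteSelection n) (x : Label) : ZMod n :=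
  ((S.i ⟨(x.1 - 1).val, ZMod.val_lt _⟩ : ℕ) : ZMod n) + (if x.2 then 1 else 0)

/-- The instantiated reinsertion set `I_S(r)`. -/
def instReins {n : ℕ} (S : CompleteSelection n) (r : Scheme) : Finset (Sym2 (ZMod n)) :=
  (reins r).image (Sym2.map (instLabel S))

/-- A simple graph "is a Hamiltonian cycle" if it has a Hamiltonian cycle
whose edges are exactly all the edges of the graph. -/
def IsHamCycleGraph {V : Type*} [DecidableEq V] (G : SimpleGraph V) : Prop :=
  ∃ (v : V) (w : G.Walk v v), w.IsHamiltonianCycle ∧ {e | e ∈ w.edges} = G.edgeSet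

/-!
Cutting the tour at the removed edges leaves segments, each of which is a path. Any list of
oriented segments that uses every segment once is again a closed walk through all the vertices,
once each: reversing and permuting the segments changes neither the vertices nor the edges inside
the segments. What changes are the edges that link the last vertex of a segment to the first vertex
of the next one: for the identity arrangement these are the removed edges, and for the arrangement
`(+1, e₁, e₂, e₃)` they are the instantiated reinsertion set.

The segments of the tour on `ZMod n` are the intervals `cut (j - 1) + 1, …, cut j` of natural
numbers, reduced modulo `n`, where the selection indices are continued periodically so that no
segment wraps around.
-/

open scoped List

section LinkEdges

variable {V ι : Type*}

/-- The list `l` is nonempty, starts with `u` and ends with `v`. -/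
def HasEnds (l : List V) (u v : V) : Prop :=
  l.head? = some u ∧ l.getLast? = some v

/-- The edges that join the exit of each entry of `l` to the entry point of the next one,
not closing up from the last entry to the first. -/
def linkEdges (exit entry : ι → V) (l : List ι) : List (Sym2 V) :=
  l.zipWith (fun x y => s(exit x, entry y)) l.tail

/-- The edges that join the exit of each entry of `l` to the entry point of the cyclically next
one. For a list of oriented segments this is its reinsertion set. -/
def cyclicLinkEdges (exit entry : ι → V) (l : List ι) : List (Sym2 V) :=
  l.zipWith (fun x y => s(exit x, entry y)) (l.rotate 1)

/-- The edges of the path that visits the vertices of `l` in order. -/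
def pathEdges (l : List V) : List (Sym2 V) := linkEdges id id l

/-- The edges of the closed tour that visits the vertices of `l` in order. -/
def cycleEdges (l : List V) : List (Sym2 V) := cyclicLinkEdges id id l

variable {exit entry : ι → V} {l l' : List ι} {x x' z z' : ι} {B : ι → List V}

theorem hasEnds_head_getLast (hl : l ≠ []) : HasEnds l (l.head hl) (l.getLast hl) :=
  ⟨List.head?_eq_some_head hl, List.getLast?_eq_some_getLast hl⟩

theorem HasEnds.reverse (h : HasEnds l x z) : HasEnds l.reverse z x := by
  simpa [HasEnds, and_comm] using h

theorem HasEnds.append (h : HasEnds l x z) (h' : HasEnds l' x' z') : HasEnds (l ++ l') x z' := by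
  simp_all [HasEnds]

theorem linkEdges_append (h : HasEnds l x z) (h' : HasEnds l' x' z') :
    linkEdges exit entry (l ++ l') =
      linkEdges exit entry l ++ s(exit z, entry x') :: linkEdges exit entry l' := by
  induction l generalizing x with
  | nil => simp [HasEnds] at h
  | cons a t ih =>
    cases t with
    | nil =>
      obtain ⟨t', rfl⟩ := List.head?_eq_some_iff.1 h'.1
      obtain rfl : a = z := by simpa using h.2
      rfl
    | cons b t => simpa [linkEdges] using ih (x := b) (by simp_all [HasEnds])

theorem pathEdges_append {l l' : List V} {u u' v v' : V} (h : HasEnds l u v)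
    (h' : HasEnds l' u' v') : pathEdges (l ++ l') = pathEdges l ++ s(v, u') :: pathEdges l' :=
  linkEdges_append h h'

theorem cyclicLinkEdges_cons (x : ι) (t : List ι) :
    cyclicLinkEdges exit entry (x :: t) = linkEdges exit entry (x :: t ++ [x]) := by
  have h := List.zipWith_append (f := fun y z => s(exit y, entry z)) (l₁ := x :: t) (l₂ := t ++ [x])
    (l₁' := [x]) (l₂' := []) (by simp)
  simpa [cyclicLinkEdges, linkEdges] using h.symm

theorem cyclicLinkEdges_of_hasEnds (h : HasEnds l x z) :
    cyclicLinkEdges exit entry l = linkEdges exit entry l ++ [s(exit z, entry x)] := by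
  obtain ⟨t, rfl⟩ := List.head?_eq_some_iff.1 h.1
  rw [cyclicLinkEdges_cons, linkEdges_append h (⟨rfl, rfl⟩ : HasEnds [x] x x)]
  rfl

theorem cyclicLinkEdges_eq_map {next : ι → V} (h : (l.map entry).rotate 1 = l.map next) :
    cyclicLinkEdges exit entry l = l.map fun x => s(exit x, next x) := by
  rw [← List.map_rotate] at h
  calc l.zipWith (fun x y => s(exit x, entry y)) (l.rotate 1)
    _ = l.zipWith (fun x v => s(exit x, v)) ((l.rotate 1).map entry) := by
      rw [List.zipWith_map_right]
    _ = l.map fun x => s(exit x, next x) := by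
      rw [h, List.zipWith_map_right, List.zipWith_self]

theorem pathEdges_reverse (l : List V) : pathEdges l.reverse = (pathEdges l).reverse := by
  induction l with
  | nil => rfl
  | cons a t ih =>
    cases t with
    | nil => rfl
    | cons b t =>
      have hb := (hasEnds_head_getLast (List.cons_ne_nil b t)).reverse
      rw [List.reverse_cons, pathEdges_append hb (⟨rfl, rfl⟩ : HasEnds [a] a a), ih]
      simp [pathEdges, linkEdges, Sym2.eq_swap]

theorem hasEnds_flatMap (h : HasEnds l x z) (hB : ∀ y ∈ l, HasEnds (B y) (entry y) (exit y)) :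
    HasEnds (l.flatMap B) (entry x) (exit z) := by
  induction l generalizing x with
  | nil => simp [HasEnds] at h
  | cons a t ih =>
    obtain rfl : a = x := by simpa using h.1
    cases t with
    | nil =>
      obtain rfl : a = z := by simpa using h.2
      simpa using hB
    | cons b t =>
      have ht : HasEnds (b :: t) b z := ⟨rfl, by simpa using h.2⟩
      exact (hB a (by simp)).append (ih ht fun y hy => hB y (by simp_all))

theorem pathEdges_flatMap_perm (hB : ∀ y ∈ l, HasEnds (B y) (entry y) (exit y)) :
    pathEdges (l.flatMap B) ~ l.flatMap (pathEdges ∘ B) ++ linkEdges exit entry l := by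
  induction l with
  | nil => rfl
  | cons a t ih =>
    obtain ⟨ha, ht⟩ := List.forall_mem_cons.1 hB
    cases t with
    | nil => simp [linkEdges]
    | cons b t =>
      have hbt := hasEnds_flatMap (hasEnds_head_getLast (List.cons_ne_nil b t)) ht
      calc pathEdges (B a ++ (b :: t).flatMap B)
        _ = pathEdges (B a) ++ s(exit a, entry b) :: pathEdges ((b :: t).flatMap B) :=
          pathEdges_append ha hbt
        _ ~ pathEdges (B a) ++ s(exit a, entry b) ::
              ((b :: t).flatMap (pathEdges ∘ B) ++ linkEdges exit entry (b :: t)) :=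
          ((ih ht).cons _).append_left _
        _ ~ pathEdges (B a) ++ ((b :: t).flatMap (pathEdges ∘ B) ++
              s(exit a, entry b) :: linkEdges exit entry (b :: t)) :=
          List.perm_middle.symm.append_left _
        _ = (a :: b :: t).flatMap (pathEdges ∘ B) ++ linkEdges exit entry (a :: b :: t) :=
          (List.append_assoc ..).symm

theorem cycleEdges_flatMap_perm (hl : l ≠ [])
    (hB : ∀ y ∈ l, HasEnds (B y) (entry y) (exit y)) :
    cycleEdges (l.flatMap B) ~ l.flatMap (pathEdges ∘ B) ++ cyclicLinkEdges exit entry l := by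
  have hends := hasEnds_head_getLast hl
  rw [cyclicLinkEdges_of_hasEnds hends, cycleEdges,
    cyclicLinkEdges_of_hasEnds (hasEnds_flatMap hends hB), ← List.append_assoc]
  exact (pathEdges_flatMap_perm hB).append_right _

end LinkEdges

section Hamiltonian

variable {V : Type*} {l : List V}

theorem getElem_cycleEdges {i : ℕ} (hi : i < (cycleEdges l).length) (h : i < l.length) :
    (cycleEdges l)[i] = s(l[i], l[(i + 1) % l.length]'(Nat.mod_lt _ (by omega))) := by
  simp [cycleEdges, cyclicLinkEdges, List.getElem_rotate]

theorem not_isDiag_of_mem_cycleEdges (hl : l.Nodup) (h2 : 2 ≤ l.length) {e : Sym2 V}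
    (he : e ∈ cycleEdges l) : ¬ e.IsDiag := by
  obtain ⟨i, hi, rfl⟩ := List.getElem_of_mem he
  have hi' : i < l.length := by simpa [cycleEdges, cyclicLinkEdges] using hi
  rw [getElem_cycleEdges hi hi', Sym2.mk_isDiag_iff, hl.getElem_inj_iff]
  rcases Nat.lt_or_ge (i + 1) l.length with h | h
  · rw [Nat.mod_eq_of_lt h]; omega
  · rw [show i + 1 = l.length by omega, Nat.mod_self]; omega

theorem nodup_cycleEdges (hl : l.Nodup) (h3 : 3 ≤ l.length) : (cycleEdges l).Nodup := by
  have hlen : (cycleEdges l).length = l.length := by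
    simp [cycleEdges, cyclicLinkEdges]
  refine List.nodup_iff_injective_getElem.2 fun ⟨i, hi⟩ ⟨j, hj⟩ hij => ?_
  have hi' := hlen ▸ hi
  have hj' := hlen ▸ hj
  simp only [getElem_cycleEdges _ hi', getElem_cycleEdges _ hj', Sym2.eq_iff,
    hl.getElem_inj_iff] at hij
  have hsucc (m : ℕ) (hm : m < l.length) : (m + 1) % l.length = m + 1 ∨
      (m + 1) % l.length = 0 ∧ m + 1 = l.length := by
    rcases Nat.lt_or_ge (m + 1) l.length with h | h
    · exact .inl (Nat.mod_eq_of_lt h)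
    · have hm' : m + 1 = l.length := by omega
      exact .inr ⟨by rw [hm', Nat.mod_self], hm'⟩
  rw [Fin.mk.injEq]
  have := hsucc i hi'
  have := hsucc j hj'
  omega

theorem isChain_adj_of_pathEdges {G : SimpleGraph V} (h : ∀ e ∈ pathEdges l, e ∈ G.edgeSet) :
    l.IsChain G.Adj := by
  induction l with
  | nil => simp
  | cons a t ih =>
    cases t with
    | nil => simp
    | cons b t =>
      obtain ⟨hab, ht⟩ : s(a, b) ∈ G.edgeSet ∧ ∀ e ∈ pathEdges (b :: t), e ∈ G.edgeSet :=
        List.forall_mem_cons.1 h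
      exact (ih ht).cons_cons hab

theorem isHamCycleGraph_cycleEdges [DecidableEq V] (hl : l.Nodup) (hall : ∀ v, v ∈ l)
    (h3 : 3 ≤ l.length) : IsHamCycleGraph (SimpleGraph.fromEdgeSet {e | e ∈ cycleEdges l}) := by
  set G := SimpleGraph.fromEdgeSet {e | e ∈ cycleEdges l} with hG
  have hedgeSet : G.edgeSet = {e | e ∈ cycleEdges l} := by
    ext e
    simpa [hG] using not_isDiag_of_mem_cycleEdges hl (by omega)
  obtain ⟨a, t, rfl⟩ := List.exists_cons_of_length_pos (show 0 < l.length by omega)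
  have hclosed : cycleEdges (a :: t) = pathEdges (a :: t ++ [a]) := cyclicLinkEdges_cons a t
  have hchain : (a :: t ++ [a]).IsChain G.Adj :=
    isChain_adj_of_pathEdges fun e he => by rw [hedgeSet, hclosed]; exact he
  obtain ⟨w, hsupport⟩ : ∃ w : G.Walk a a, w.support = a :: t ++ [a] :=
    ⟨(SimpleGraph.Walk.ofSupport _ (List.cons_ne_nil _ _) hchain).copy rfl (by simp),
      (SimpleGraph.Walk.support_copy ..).trans (SimpleGraph.Walk.support_ofSupport ..)⟩
  have hedges : w.edges = cycleEdges (a :: t) := by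
    rw [SimpleGraph.Walk.edges_eq_zipWith_support, hsupport, hclosed]; rfl
  have htail : w.support.tail ~ a :: t := by
    rw [hsupport]; exact List.perm_append_singleton a t
  refine ⟨a, w, ?_, by rw [hedges, hedgeSet]⟩
  rw [SimpleGraph.Walk.isHamiltonianCycle_iff_isCycle_and_support_count_tail_eq_one,
    SimpleGraph.Walk.isCycle_def, SimpleGraph.Walk.isTrail_def, hedges, htail.nodup_iff]
  refine ⟨⟨nodup_cycleEdges hl h3, ?_, hl⟩, fun v => ?_⟩
  · intro hnil
    simp [hnil] at hsupport
  · rw [htail.count_eq, List.count_eq_one_of_mem hl (hall v)]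

end Hamiltonian

section Rearrangement

variable {V ι : Type*} {exit entry : ι → V} {l l' : List ι} {B : ι → List V}

theorem cycleEdges_flatMap_diff (hl : l ≠ [])
    (hB : ∀ y ∈ l, HasEnds (B y) (entry y) (exit y)) (hnodup : (l.flatMap B).Nodup)
    (h3 : 3 ≤ (l.flatMap B).length) :
    {e | e ∈ cycleEdges (l.flatMap B)} \ {e | e ∈ cyclicLinkEdges exit entry l} =
      {e | e ∈ l.flatMap (pathEdges ∘ B)} := by
  have hperm := cycleEdges_flatMap_perm hl hB
  have hdisj := List.disjoint_of_nodup_append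
    (hperm.nodup_iff.1 (nodup_cycleEdges hnodup h3))
  ext e
  simp only [Set.mem_sdiff, Set.mem_ofPred_eq, hperm.mem_iff, List.mem_append]
  exact ⟨fun h => h.1.resolve_right h.2, fun h => ⟨.inl h, hdisj h⟩⟩

theorem isHamCycleGraph_rearrange [DecidableEq V]
    (hB : ∀ y ∈ l, HasEnds (B y) (entry y) (exit y))
    (hB' : ∀ y ∈ l', HasEnds (B y) (entry y) (exit y))
    (hnodup : (l.flatMap B).Nodup) (hall : ∀ v, v ∈ l.flatMap B)
    (h3 : 3 ≤ (l.flatMap B).length) (hvertices : l'.flatMap B ~ l.flatMap B)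
    (hinner : l'.flatMap (pathEdges ∘ B) ~ l.flatMap (pathEdges ∘ B)) :
    IsHamCycleGraph (SimpleGraph.fromEdgeSet
      ({e | e ∈ cycleEdges (l.flatMap B)} \ {e | e ∈ cyclicLinkEdges exit entry l} ∪
        {e | e ∈ cyclicLinkEdges exit entry l'})) := by
  have hl : l ≠ [] := by rintro rfl; simp at h3
  have hl' : l' ≠ [] := by rintro rfl; simp [← hvertices.length_eq] at h3
  have hedges : {e | e ∈ cycleEdges (l.flatMap B)} \ {e | e ∈ cyclicLinkEdges exit entry l} ∪
      {e | e ∈ cyclicLinkEdges exit entry l'} = {e | e ∈ cycleEdges (l'.flatMap B)} := by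
    rw [cycleEdges_flatMap_diff hl hB hnodup h3]
    ext e
    simp [(cycleEdges_flatMap_perm hl' hB').mem_iff, ← hinner.mem_iff]
  rw [hedges]
  exact isHamCycleGraph_cycleEdges (hvertices.nodup_iff.2 hnodup)
    (fun v => hvertices.mem_iff.2 (hall v)) (hvertices.length_eq ▸ h3)

end Rearrangement

section Orientation

variable {α V : Type*}

/-- Extends a function of the segment `j` to oriented segments: `pos j` is its value at `+j` and
`neg j` its value at `-j`. The junk segment `0` counts as negatively oriented. -/
def orient (pos neg : ℕ → α) (e : ℤ) : α :=
  if 0 < e then pos e.natAbs else neg e.natAbs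

/-- The vertices of an oriented segment in the order in which it is traversed, where `A j` lists
the vertices of the segment `j`. -/
def orientedSegment (A : ℕ → List V) : ℤ → List V :=
  orient A fun j => (A j).reverse

variable {A : ℕ → List V} {first last : ℕ → V} {l l' : List ℤ}

theorem orient_add_one (pos neg : ℕ → α) (m : ℕ) : orient pos neg (m + 1) = pos (m + 1) :=
  if_pos (Int.natCast_succ_pos m)

theorem orient_neg_add_one (pos neg : ℕ → α) (m : ℕ) :
    orient pos neg (-(m + 1)) = neg (m + 1) := by
  have hneg : ¬ 0 < -((m : ℤ) + 1) := by omega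
  rw [orient, if_neg hneg, Int.natAbs_neg]
  rfl

theorem hasEnds_orientedSegment {e : ℤ}
    (h : HasEnds (A e.natAbs) (first e.natAbs) (last e.natAbs)) :
    HasEnds (orientedSegment A e) (orient first last e) (orient last first e) := by
  unfold orientedSegment orient
  split_ifs
  exacts [h, h.reverse]

theorem orientedSegment_perm (A : ℕ → List V) (e : ℤ) : orientedSegment A e ~ A e.natAbs := by
  unfold orientedSegment orient
  split_ifs
  exacts [.rfl, List.reverse_perm _]

theorem pathEdges_orientedSegment_perm (A : ℕ → List V) (e : ℤ) :
    pathEdges (orientedSegment A e) ~ pathEdges (A e.natAbs) := by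
  unfold orientedSegment orient
  split_ifs
  exacts [.rfl, pathEdges_reverse (A e.natAbs) ▸ List.reverse_perm _]

theorem flatMap_perm_of_natAbs {f : ℤ → List α} {g : ℕ → List α} (h : ∀ e, f e ~ g e.natAbs)
    (hl : l.map Int.natAbs ~ l'.map Int.natAbs) : l.flatMap f ~ l'.flatMap f :=
  have hfg (m : List ℤ) : m.flatMap f ~ (m.map Int.natAbs).flatMap g := by
    rw [List.flatMap_map]
    exact List.Perm.flatMap_left m fun e _ => h e
  (hfg l).trans ((hl.flatMap_right g).trans (hfg l').symm)

theorem isHamCycleGraph_reorient [DecidableEq V]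
    (hA : ∀ e ∈ l, HasEnds (A e.natAbs) (first e.natAbs) (last e.natAbs))
    (hnodup : (l.flatMap (orientedSegment A)).Nodup)
    (hall : ∀ v, v ∈ l.flatMap (orientedSegment A))
    (h3 : 3 ≤ (l.flatMap (orientedSegment A)).length)
    (hl : l'.map Int.natAbs ~ l.map Int.natAbs) :
    IsHamCycleGraph (SimpleGraph.fromEdgeSet
      ({e | e ∈ cycleEdges (l.flatMap (orientedSegment A))} \
          {e | e ∈ cyclicLinkEdges (orient last first) (orient first last) l} ∪
        {e | e ∈ cyclicLinkEdges (orient last first) (orient first last) l'})) := by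
  have hA' : ∀ e ∈ l', HasEnds (A e.natAbs) (first e.natAbs) (last e.natAbs) := fun e he => by
    obtain ⟨e₀, he₀, habs⟩ := List.mem_map.1 (hl.subset (List.mem_map_of_mem he))
    exact habs ▸ hA e₀ he₀
  exact isHamCycleGraph_rearrange (fun e he => hasEnds_orientedSegment (hA e he))
    (fun e he => hasEnds_orientedSegment (hA' e he)) hnodup hall h3
    (flatMap_perm_of_natAbs (orientedSegment_perm A) hl)
    (flatMap_perm_of_natAbs (g := pathEdges ∘ A) (pathEdges_orientedSegment_perm A) hl)

end Orientation

section Arc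

theorem rotate_one_map_range' {α : Type*} {f : ℕ → α} {a m : ℕ} (hf : f (a + m) = f a) :
    ((List.range' a m).map f).rotate 1 = (List.range' a m).map fun j => f (j + 1) := by
  cases m with
  | zero => rfl
  | succ m =>
    calc ((List.range' a (m + 1)).map f).rotate 1
      _ = (List.range' (a + 1) m).map f ++ [f a] := by simp [List.range'_succ]
      _ = (List.range' (a + 1) (m + 1)).map f := by
        rw [List.range'_1_concat, List.map_append, ← hf, Nat.add_right_comm]; rfl
      _ = (List.range' a (m + 1)).map fun j => f (j + 1) := by
        rw [Nat.add_comm a, ← List.map_add_range', List.map_map]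
        simp [Function.comp_def, Nat.add_comm]

variable {n a b c : ℕ}

/-- The vertices `a + 1, …, b` of the tour on `ZMod n`, in order. -/
def arc (n a b : ℕ) : List (ZMod n) := (List.range' (a + 1) (b - a)).map (↑)

theorem hasEnds_arc (h : a < b) : HasEnds (arc n a b) (a + 1) b := by
  obtain ⟨m, rfl⟩ := Nat.exists_eq_add_of_lt h
  refine ⟨?_, ?_⟩
  · simp [arc, Nat.add_assoc, List.range'_succ]
  · simp [arc, Nat.add_assoc, List.range'_1_concat]
    ring

theorem arc_append (hab : a ≤ b) (hbc : b ≤ c) : arc n a b ++ arc n b c = arc n a c := by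
  obtain ⟨p, rfl⟩ := Nat.exists_eq_add_of_le hab
  obtain ⟨q, rfl⟩ := Nat.exists_eq_add_of_le hbc
  simp only [arc, ← List.map_append, Nat.add_sub_cancel_left, Nat.add_assoc]
  rw [Nat.add_sub_add_left, Nat.add_sub_cancel_left, ← List.range'_append_1, Nat.add_right_comm,
    Nat.add_assoc]

theorem flatMap_arc {cut : ℕ → ℕ} (hcut : Monotone cut) (k : ℕ) :
    (List.range' 1 k).flatMap (fun j => arc n (cut (j - 1)) (cut j)) = arc n (cut 0) (cut k) := by
  induction k with
  | zero => simp [arc]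
  | succ k ih =>
    rw [List.range'_1_concat, List.flatMap_append, ih, List.flatMap_singleton,
      Nat.add_sub_cancel_left, Nat.add_comm 1 k,
      arc_append (hcut (Nat.zero_le k)) (hcut (Nat.le_succ k))]

theorem length_arc_self_add (n a : ℕ) : (arc n a (a + n)).length = n := by simp [arc]

theorem mem_arc_self_add [NeZero n] (a : ℕ) (v : ZMod n) : v ∈ arc n a (a + n) := by
  have hlt := ZMod.val_lt (v - ((a + 1 : ℕ) : ZMod n))
  refine List.mem_map.2 ⟨a + 1 + (v - ((a + 1 : ℕ) : ZMod n)).val, ?_, ?_⟩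
  · simpa [List.mem_range'_1, Nat.add_assoc] using hlt
  · rw [Nat.cast_add, ZMod.natCast_zmod_val, add_sub_cancel]

theorem nodup_arc_self_add [NeZero n] (a : ℕ) : (arc n a (a + n)).Nodup := by
  have hfinset : (arc n a (a + n)).toFinset = Finset.univ := by
    ext v
    simp [mem_arc_self_add]
  rw [← Multiset.coe_nodup, ← Multiset.toFinset_card_eq_card_iff_nodup]
  simp [hfinset, ZMod.card, length_arc_self_add]

theorem setOf_mem_cycleEdges_arc [NeZero n] (a : ℕ) :
    {e | e ∈ cycleEdges (arc n a (a + n))} = tourEdges n := by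
  have hrotate : ((arc n a (a + n)).map id).rotate 1 = (arc n a (a + n)).map (· + 1) := by
    rw [List.map_id, arc, rotate_one_map_range' (by simp [add_right_comm]), List.map_map]
    simp [Function.comp_def]
  rw [cycleEdges, cyclicLinkEdges_eq_map hrotate]
  ext e
  simp [tourEdges, mem_arc_self_add, eq_comm]

end Arc

section TourReinsertion

variable {n k : ℕ} {cut : ℕ → ℕ}

/-- The exit vertex of an oriented segment when the segment `j` of the tour on `ZMod n` runs from
`cut (j - 1) + 1` to `cut j`. -/
def exitVertex (n : ℕ) (cut : ℕ → ℕ) : ℤ → ZMod n :=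
  orient (fun j => cut j) (fun j => cut (j - 1) + 1)

/-- The entry vertex of an oriented segment when the segment `j` of the tour on `ZMod n` runs from
`cut (j - 1) + 1` to `cut j`. -/
def entryVertex (n : ℕ) (cut : ℕ → ℕ) : ℤ → ZMod n :=
  orient (fun j => cut (j - 1) + 1) (fun j => cut j)

theorem map_orient_range' {α : Type*} (pos neg : ℕ → α) (k : ℕ) :
    ((List.range' 1 k).map Nat.cast).map (orient pos neg) = (List.range' 1 k).map pos := by
  rw [List.map_map]
  refine List.map_congr_left fun j hj => ?_
  have hpos : 0 < j := (List.mem_range'_1.1 hj).1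
  simp [orient, hpos]

theorem cyclicLinkEdges_range' (hk : cut k = cut 0 + n) :
    cyclicLinkEdges (exitVertex n cut) (entryVertex n cut) ((List.range' 1 k).map Nat.cast) =
      (List.range' 1 k).map fun j => s((cut j : ZMod n), (cut j : ZMod n) + 1) := by
  have hrotate : (((List.range' 1 k).map Nat.cast).map (entryVertex n cut)).rotate 1 =
      ((List.range' 1 k).map Nat.cast).map fun e : ℤ => (cut e.natAbs : ZMod n) + 1 := by
    rw [entryVertex, map_orient_range', rotate_one_map_range' (by simp [hk]), List.map_map]
    rfl
  rw [cyclicLinkEdges_eq_map hrotate, List.map_map]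
  refine List.map_congr_left fun j hj => ?_
  have hpos : 0 < j := (List.mem_range'_1.1 hj).1
  simp [exitVertex, orient, hpos]

theorem isHamCycleGraph_tour_reinsertion (h3 : 3 ≤ n) (hcut : StrictMono cut)
    (hk : cut k = cut 0 + n) {l : List ℤ} (hl : l.map Int.natAbs ~ List.range' 1 k) :
    IsHamCycleGraph (SimpleGraph.fromEdgeSet
      (tourEdges n \ (fun j => s((cut j : ZMod n), (cut j : ZMod n) + 1)) '' Set.Icc 1 k ∪
        {e | e ∈ cyclicLinkEdges (exitVertex n cut) (entryVertex n cut) l})) := by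
  have : NeZero n := ⟨by omega⟩
  let segment (j : ℕ) : List (ZMod n) := arc n (cut (j - 1)) (cut j)
  let identity : List ℤ := (List.range' 1 k).map Nat.cast
  have hverts : identity.flatMap (orientedSegment segment) = arc n (cut 0) (cut 0 + n) := by
    rw [List.flatMap_def, orientedSegment, map_orient_range', ← List.flatMap_def,
      flatMap_arc hcut.monotone, hk]
  have hremoved : {e | e ∈ cyclicLinkEdges (exitVertex n cut) (entryVertex n cut) identity} =
      (fun j => s((cut j : ZMod n), (cut j : ZMod n) + 1)) '' Set.Icc 1 k := by
    rw [cyclicLinkEdges_range' hk]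
    ext e
    simp [Nat.lt_one_add_iff, and_assoc]
  have hends (j : ℕ) (hj : 1 ≤ j) : HasEnds (segment j) (cut (j - 1) + 1) (cut j) :=
    hasEnds_arc (hcut (Nat.sub_lt hj one_pos))
  rw [← setOf_mem_cycleEdges_arc (cut 0), ← hremoved, ← hverts]
  refine isHamCycleGraph_reorient (fun e he => hends _ ?_) (hverts ▸ nodup_arc_self_add _)
    (fun v => hverts ▸ mem_arc_self_add _ v) (by rwa [hverts, length_arc_self_add]) ?_
  · obtain ⟨j, hj, rfl⟩ := List.mem_map.1 he
    simpa using (List.mem_range'_1.1 hj).1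
  · simpa [identity, Function.comp_def] using hl

end TourReinsertion

section FourOpt

/-- Instantiation of a label at the removed edges `{i k, i k + 1}` of the tour on `ZMod n`:
`instLabel` for indices that need not form a complete selection. -/
def labelVertex (n : ℕ) (i : Fin 4 → ℕ) (x : Label) : ZMod n :=
  ((i ⟨(x.1 - 1).val, ZMod.val_lt _⟩ : ℕ) : ZMod n) + (if x.2 then 1 else 0)

/-- The periodic extension `i 3, i 0 + n, i 1 + n, i 2 + n, i 3 + n, i 0 + 2 * n, …` of the four
selection indices. It starts at `i 3`, so that the segment `1` is the one after the last index. -/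
def cutPoint (n : ℕ) (i : Fin 4 → ℕ) (j : ℕ) : ℕ :=
  i (Fin.ofNat 4 (j + 3)) + n * ((j + 3) / 4)

/-- The cyclic sequence of oriented segments `(+1, e₁, e₂, e₃)` of a reinsertion scheme. -/
def arrangement (r : Scheme) : List ℤ := [1, r.1, r.2.1, r.2.2]

variable {n : ℕ} {i : Fin 4 → ℕ} {r : Scheme}

theorem cutPoint_eq {j q k : ℕ} (hk : k < 4) (h : j + 3 = 4 * q + k) :
    cutPoint n i j = i ⟨k, hk⟩ + n * q := by
  have hmod : (j + 3) % 4 = k := by omega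
  have hdiv : (j + 3) / 4 = q := by omega
  simp only [cutPoint, Fin.ofNat, hmod, hdiv]

theorem strictMono_cutPoint (hi : StrictMono i) (hlt : i 3 < n) : StrictMono (cutPoint n i) := by
  refine strictMono_nat_of_lt_succ fun j => ?_
  obtain ⟨q, k, hk, hj⟩ : ∃ q k, k < 4 ∧ j + 3 = 4 * q + k :=
    ⟨(j + 3) / 4, (j + 3) % 4, Nat.mod_lt _ four_pos, (Nat.div_add_mod _ _).symm⟩
  rw [cutPoint_eq hk hj]
  rcases Nat.lt_or_ge k 3 with hk3 | hk3
  · rw [cutPoint_eq (q := q) (k := k + 1) (by omega) (by omega)]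
    exact Nat.add_lt_add_right (hi (Fin.mk_lt_mk.2 (Nat.lt_succ_self k))) _
  · obtain rfl : k = 3 := by omega
    rw [cutPoint_eq (q := q + 1) (k := 0) four_pos (by omega), Nat.mul_succ, Nat.add_comm (n * q),
      ← Nat.add_assoc]
    exact Nat.add_lt_add_right (hlt.trans_le (Nat.le_add_left n _)) _

theorem map_natAbs_arrangement_perm (hr : r ∈ allSchemes) :
    (arrangement r).map Int.natAbs ~ List.range' 1 4 := by
  revert r
  decide

theorem labelVertex_natCast (j : ℕ) (primed : Bool) :
    labelVertex n i (j, primed) = cutPoint n i j + if primed then 1 else 0 := by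
  have hpred : (j : ZMod 4) - 1 = (j + 3 : ℕ) := by
    rw [Nat.cast_add, sub_eq_add_neg]
    rfl
  simp only [labelVertex, hpred, ZMod.val_natCast]
  simp [cutPoint, Fin.ofNat]

theorem exists_eq_add_one_or_neg {e : ℤ} (he : e ≠ 0) :
    ∃ m : ℕ, e = m + 1 ∨ e = -(m + 1) :=
  ⟨e.natAbs - 1, by omega⟩

theorem labelVertex_exitL {e : ℤ} (he : e ≠ 0) :
    labelVertex n i (exitL e) = exitVertex n (cutPoint n i) e := by
  obtain ⟨m, rfl | rfl⟩ := exists_eq_add_one_or_neg he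
  · have hexit : exitL (m + 1) = (((m + 1 : ℕ) : ZMod 4), false) := by simp [exitL]
    rw [hexit, labelVertex_natCast, exitVertex, orient_add_one]
    simp
  · have hexit : exitL (-(m + 1)) = ((m : ZMod 4), true) := by simp [exitL]
    rw [hexit, labelVertex_natCast, exitVertex, orient_neg_add_one]
    simp

theorem labelVertex_entryL {e : ℤ} (he : e ≠ 0) :
    labelVertex n i (entryL e) = entryVertex n (cutPoint n i) e := by
  obtain ⟨m, rfl | rfl⟩ := exists_eq_add_one_or_neg he
  · have hentry : entryL (m + 1) = ((m : ZMod 4), true) := by simp [entryL]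
    rw [hentry, labelVertex_natCast, entryVertex, orient_add_one]
    simp
  · have hentry : entryL (-(m + 1)) = (((m + 1 : ℕ) : ZMod 4), false) := by simp [entryL]
    rw [hentry, labelVertex_natCast, entryVertex, orient_neg_add_one]
    simp

theorem ne_zero_of_mem_arrangement (hr : r ∈ allSchemes) {e : ℤ} (he : e ∈ arrangement r) :
    e ≠ 0 := by
  have habs := (map_natAbs_arrangement_perm hr).subset (List.mem_map_of_mem he)
  have hpos := (List.mem_range'_1.1 habs).1
  omega

theorem setOf_mem_cyclicLinkEdges_arrangement (hr : r ∈ allSchemes) :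
    {e | e ∈ cyclicLinkEdges (exitVertex n (cutPoint n i)) (entryVertex n (cutPoint n i))
      (arrangement r)} = ↑((reins r).image (Sym2.map (labelVertex n i))) := by
  have hne := fun e he => ne_zero_of_mem_arrangement hr (e := e) he
  simp only [arrangement, List.forall_mem_cons] at hne
  obtain ⟨h0, h1, h2, h3, -⟩ := hne
  ext e
  simp [cyclicLinkEdges, arrangement, reins, labelVertex_exitL, labelVertex_entryL, h0, h1, h2, h3]

theorem image_cutPoint_Icc :
    (fun j => s((cutPoint n i j : ZMod n), (cutPoint n i j : ZMod n) + 1)) '' Set.Icc 1 4 =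
      ↑(Finset.univ.image fun k : Fin 4 => s((i k : ZMod n), (i k : ZMod n) + 1)) := by
  have hcut (k : Fin 4) : (cutPoint n i (k + 1) : ZMod n) = i k := by
    rw [cutPoint_eq (q := 1) k.isLt (by omega)]
    simp
  rw [Finset.coe_image, Finset.coe_univ, Set.image_univ]
  refine Set.Subset.antisymm ?_ ?_
  · rintro _ ⟨j, ⟨h1, h4⟩, rfl⟩
    exact ⟨⟨j - 1, by omega⟩, by simp [← hcut, Nat.sub_add_cancel h1]⟩
  · rintro _ ⟨k, rfl⟩
    exact ⟨k + 1, ⟨Nat.le_add_left 1 k, k.isLt⟩, by simp only [hcut]⟩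

end FourOpt

theorem move_gives_tour_general {n : ℕ} {i : Fin 4 → ℕ} (hi : StrictMono i) (hlt : i 3 < n)
    {r : Scheme} (hr : r ∈ allSchemes) :
    IsHamCycleGraph (SimpleGraph.fromEdgeSet
      ((tourEdges n \ ↑(Finset.univ.image fun k : Fin 4 => s((i k : ZMod n), (i k : ZMod n) + 1))) ∪
        ↑((reins r).image (Sym2.map (labelVertex n i))))) := by
  have hcut := strictMono_cutPoint hi hlt
  have hcycle : cutPoint n i 4 = cutPoint n i 0 + n := by simp [cutPoint]
  have h4 : 4 + cutPoint n i 0 ≤ cutPoint n i 4 := hcut.add_le_nat 4 0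
  rw [← image_cutPoint_Icc, ← setOf_mem_cyclicLinkEdges_arrangement hr]
  exact isHamCycleGraph_tour_reinsertion (by omega) hcut hcycle (map_natAbs_arrangement_perm hr)

/-- For every `n ≥ 8`, every complete selection `S` and every pure 4-OPT
reinsertion scheme `r`, the graph on `ZMod n` with edge set
`(E(T) \ R(S)) ∪ I_S(r)` is a Hamiltonian cycle. -/
theorem move_gives_tour (n : ℕ) (hn : 8 ≤ n) (S : CompleteSelection n) (r : Scheme)
    (hr : r ∈ allSchemes) (hpure : IsPure r) :
    IsHamCycleGraph (SimpleGraph.fromEdgeSet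
      ((tourEdges n \ ↑(removalSet S)) ∪ ↑(instReins S r))) :=
  move_gives_tour_general S.mono (by have := S.le; omega) hr
end

section
/- For every n ≥ 8 and every complete selection S = (i₁,i₂,i₃,i₄) on the tour T, the number of sets I of 4 unordered pairs of distinct vertices of ℤ/nℤ with I ∩ R(S) = ∅ such that the graph on vertex set ℤ/nℤ with edge set (E(T) \ R(S)) ∪ I is a Hamiltonian cycle is exactly 25. -/
/-!
Removing the four selected edges cuts the tour into four paths, whose eight ends are the labels.
Comparing degrees, a set `I` of four edges can complete them to a 2-regular graph only if it is a
perfect matching of the labels, and a 2-regular graph is a Hamiltonian cycle exactly when it is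
connected. Connectedness only depends on the matching: it means that the fixed-point-free
involution given by `I` and the one exchanging the two ends of each path act transitively on the
labels. Then their composition, started at the exit of segment `1`, runs through the four segments
and returns, and the exits met on the way are those of a signed permutation of the segments
`2, 3, 4`, so that `I` is one of the `48` instantiated reinsertion sets. Purity of the scheme says
that none of the removed edges is put back.
-/

open Function Set

section Graph

variable {V : Type*} {G : SimpleGraph V}

theorem IsHamCycleGraph.connected [DecidableEq V] (hG : IsHamCycleGraph G) : G.Connected := by
  obtain ⟨v, w, hw, -⟩ := hG
  have := hw.finite
  have := Fintype.ofFinite V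
  exact SimpleGraph.IsHamiltonian.connected fun _ ↦ ⟨v, w, hw⟩

theorem IsHamCycleGraph.ncard_neighborSet [DecidableEq V] (hG : IsHamCycleGraph G) (u : V) :
    (G.neighborSet u).ncard = 2 := by
  obtain ⟨v, w, hw, hedges⟩ := hG
  have hsub : w.toSubgraph.neighborSet u = G.neighborSet u := by
    ext x
    rw [SimpleGraph.Subgraph.mem_neighborSet, SimpleGraph.Walk.adj_toSubgraph_iff_mem_edges,
      SimpleGraph.mem_neighborSet, ← SimpleGraph.mem_edgeSet, ← hedges]
    rfl
  rw [← hsub, hw.isCycle.ncard_neighborSet_toSubgraph_eq_two (hw.mem_support u)]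

theorem isHamCycleGraph_of_connected_of_ncard_neighborSet [DecidableEq V] [Finite V]
    (hconn : G.Connected) (hdeg : ∀ v, (G.neighborSet v).ncard = 2) : IsHamCycleGraph G := by
  have hcycles : G.IsCycles := fun v _ ↦ hdeg v
  obtain ⟨v⟩ := hconn.nonempty
  obtain ⟨w, hw, hverts⟩ := hcycles.exists_cycle_toSubgraph_verts_eq_connectedComponentSupp
    (c := G.connectedComponentMk v) rfl (nonempty_of_ncard_ne_zero (by rw [hdeg]; decide))
  have hspan (u : V) : u ∈ w.support := by
    rw [← SimpleGraph.Walk.mem_verts_toSubgraph, hverts]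
    exact SimpleGraph.ConnectedComponent.sound (hconn.preconnected u v)
  have hneighbor (u : V) : w.toSubgraph.neighborSet u = G.neighborSet u :=
    eq_of_subset_of_ncard_le (w.toSubgraph.neighborSet_subset u)
      (by rw [hdeg, hw.ncard_neighborSet_toSubgraph_eq_two (hspan u)])
      (toFinite _)
  refine ⟨v, w, ?_, ?_⟩
  · rw [SimpleGraph.Walk.isHamiltonianCycle_iff_isCycle_and_support_count_tail_eq_one]
    refine ⟨hw, fun u ↦ List.count_eq_one_of_mem hw.support_nodup ?_⟩
    obtain rfl | hu := (w.mem_support_iff).1 (hspan u)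
    · exact SimpleGraph.Walk.end_mem_tail_support hw.not_nil
    · exact hu
  · ext ⟨x, y⟩
    rw [mem_ofPred_eq, ← SimpleGraph.Walk.adj_toSubgraph_iff_mem_edges]
    exact Set.ext_iff.1 (hneighbor x) y

theorem isHamCycleGraph_iff [DecidableEq V] [Finite V] :
    IsHamCycleGraph G ↔ G.Connected ∧ ∀ v, (G.neighborSet v).ncard = 2 :=
  ⟨fun hG ↦ ⟨hG.connected, hG.ncard_neighborSet⟩,
    fun h ↦ isHamCycleGraph_of_connected_of_ncard_neighborSet h.1 h.2⟩

theorem eq_univ_of_preconnected (hG : G.Preconnected) {B : Set V} (hB : B.Nonempty)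
    (hadj : ∀ v w, G.Adj v w → v ∈ B → w ∈ B) : B = univ := by
  obtain ⟨v, hv⟩ := hB
  refine eq_univ_of_forall fun w ↦ ?_
  obtain ⟨p⟩ := hG v w
  induction p with
  | nil => exact hv
  | cons h _ ih => exact ih (hadj _ _ h hv)

end Graph

section EdgeDegree

variable {V W : Type*}

/-- The degree of `v` in the graph with edge set `E`: the number of elements of `E` that contain
`v`. Working with sets of unordered pairs rather than with graphs makes degrees additive over
disjoint unions of edge sets. As `Set.ncard` is used, the value is `0` if there are infinitely
many such edges. -/
noncomputable def edgeDegree (E : Set (Sym2 V)) (v : V) : ℕ := (E ∩ {e | v ∈ e}).ncard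

theorem edgeDegree_coe [DecidableEq V] (E : Finset (Sym2 V)) (v : V) :
    edgeDegree (E : Set (Sym2 V)) v = (E.filter (v ∈ ·)).card := by
  rw [edgeDegree, ← ncard_coe_finset, Finset.coe_filter]
  rfl

theorem edgeDegree_eq_zero_iff [Finite V] {E : Set (Sym2 V)} {v : V} :
    edgeDegree E v = 0 ↔ ∀ e ∈ E, v ∉ e := by
  rw [edgeDegree, ncard_eq_zero (toFinite _), ← disjoint_iff_inter_eq_empty, disjoint_left]
  rfl

theorem ncard_neighborSet_fromEdgeSet {E : Set (Sym2 V)} (hE : ∀ e ∈ E, ¬ e.IsDiag) (v : V) :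
    ((SimpleGraph.fromEdgeSet E).neighborSet v).ncard = edgeDegree E v := by
  rw [edgeDegree, ← ncard_image_of_injective _ (Sym2.mkEmbedding v).injective]
  congr 1
  ext e
  constructor
  · rintro ⟨w, hw, rfl⟩
    exact ⟨((SimpleGraph.fromEdgeSet_adj E).1 hw).1, Sym2.mem_mk_left v w⟩
  · rintro ⟨he, w, rfl⟩
    exact ⟨w, (SimpleGraph.fromEdgeSet_adj E).2 ⟨he, hE _ he⟩, rfl⟩

theorem isHamCycleGraph_fromEdgeSet_iff [DecidableEq V] [Finite V] {E : Set (Sym2 V)}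
    (hE : ∀ e ∈ E, ¬ e.IsDiag) :
    IsHamCycleGraph (SimpleGraph.fromEdgeSet E) ↔
      (SimpleGraph.fromEdgeSet E).Connected ∧ ∀ v, edgeDegree E v = 2 := by
  simp only [isHamCycleGraph_iff, ncard_neighborSet_fromEdgeSet hE]

theorem edgeDegree_union_le (E F : Set (Sym2 V)) (v : V) :
    edgeDegree (E ∪ F) v ≤ edgeDegree E v + edgeDegree F v := by
  rw [edgeDegree, union_inter_distrib_right]
  exact ncard_union_le _ _

theorem edgeDegree_union [Finite V] {E F : Set (Sym2 V)} (h : Disjoint E F) (v : V) :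
    edgeDegree (E ∪ F) v = edgeDegree E v + edgeDegree F v := by
  rw [edgeDegree, union_inter_distrib_right,
    ncard_union_eq (h.mono inter_subset_left inter_subset_left)]
  rfl

theorem sum_edgeDegree [Fintype V] {E : Set (Sym2 V)} (hE : ∀ e ∈ E, ¬ e.IsDiag) :
    ∑ v, edgeDegree E v = 2 * E.ncard := by
  classical
  lift E to Finset (Sym2 V) using E.toFinite
  have hends (e) (he : e ∈ E) : (Finset.univ.filter (· ∈ e)).card = 2 := by
    rw [← Sym2.card_toFinset_of_not_isDiag e (hE e he)]
    congr 1
    ext v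
    simp only [Finset.mem_filter, Finset.mem_univ, true_and, Sym2.mem_toFinset]
  simp only [edgeDegree_coe, ncard_coe_finset]
  rw [mul_comm, ← smul_eq_mul, ← Finset.sum_const, ← Finset.sum_congr rfl hends]
  exact Finset.sum_card_bipartiteAbove_eq_sum_card_bipartiteBelow _

theorem two_mul_ncard_of_edgeDegree_eq_one [Finite V] {M : Set (Sym2 V)}
    (hM : ∀ e ∈ M, ¬ e.IsDiag) (hdeg : ∀ v, edgeDegree M v = 1) : 2 * M.ncard = Nat.card V := by
  have := Fintype.ofFinite V
  rw [← sum_edgeDegree hM, Finset.sum_congr rfl fun v _ ↦ hdeg v, Finset.sum_const,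
    Finset.card_univ, smul_eq_mul, mul_one, Nat.card_eq_fintype_card]

theorem edgeDegree_image {φ : V → W} (hφ : Injective φ) (E : Set (Sym2 V)) (v : V) :
    edgeDegree (Sym2.map φ '' E) (φ v) = edgeDegree E v := by
  rw [edgeDegree, ← image_inter_preimage, ncard_image_of_injective _ (Sym2.map.injective hφ),
    edgeDegree]
  congr! 2
  ext e
  exact Sym2.mem_map.trans ⟨fun ⟨w, hw, h⟩ ↦ hφ h ▸ hw, fun hv ↦ ⟨v, hv, rfl⟩⟩

theorem edgeDegree_image_of_notMem_range [Finite W] {φ : V → W} (E : Set (Sym2 V)) {w : W}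
    (hw : w ∉ range φ) : edgeDegree (Sym2.map φ '' E) w = 0 := by
  rw [edgeDegree_eq_zero_iff]
  rintro _ ⟨e, -, rfl⟩ hmem
  obtain ⟨v, -, rfl⟩ := Sym2.mem_map.1 hmem
  exact hw ⟨v, rfl⟩

theorem subset_range_map_of_edgeDegree_eq_zero [Finite W] {φ : V → W} {E : Set (Sym2 W)}
    (hE : ∀ w, w ∉ range φ → edgeDegree E w = 0) : E ⊆ range (Sym2.map φ) := by
  have hmem (e) (he : e ∈ E) (w) (hw : w ∈ e) : w ∈ range φ :=
    by_contra fun h ↦ edgeDegree_eq_zero_iff.1 (hE w h) e he hw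
  rintro ⟨x, y⟩ he
  obtain ⟨v, rfl⟩ := hmem _ he x (Sym2.mem_mk_left x y)
  obtain ⟨w, rfl⟩ := hmem _ he y (Sym2.mem_mk_right _ y)
  exact ⟨s(v, w), rfl⟩

theorem edgeDegree_image_congr [Finite W] {φ : V → W} (hφ : Injective φ) {E F : Set (Sym2 V)}
    (h : edgeDegree E = edgeDegree F) :
    edgeDegree (Sym2.map φ '' E) = edgeDegree (Sym2.map φ '' F) := by
  ext w
  by_cases hw : w ∈ range φ
  · obtain ⟨v, rfl⟩ := hw
    rw [edgeDegree_image hφ, edgeDegree_image hφ, h]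
  · rw [edgeDegree_image_of_notMem_range E hw, edgeDegree_image_of_notMem_range F hw]

theorem edgeDegree_exchange [Finite V] {T R I : Set (Sym2 V)} (hRT : R ⊆ T)
    (hI : Disjoint (T \ R) I) (hdeg : edgeDegree I = edgeDegree R) :
    edgeDegree ((T \ R) ∪ I) = edgeDegree T := by
  ext v
  rw [edgeDegree_union hI, hdeg, ← edgeDegree_union disjoint_sdiff_left,
    sdiff_union_of_subset hRT]

-- The inequality `edgeDegree R ≤ edgeDegree I` holds pointwise; by the handshake lemma both sides
-- have the same sum.
theorem edgeDegree_eq_of_exchange [Finite V] {T R I : Set (Sym2 V)} (hRT : R ⊆ T)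
    (hR : ∀ e ∈ R, ¬ e.IsDiag) (hI : ∀ e ∈ I, ¬ e.IsDiag) (hcard : I.ncard = R.ncard)
    (hdeg : edgeDegree ((T \ R) ∪ I) = edgeDegree T) : edgeDegree I = edgeDegree R := by
  have := Fintype.ofFinite V
  have hle (v : V) : edgeDegree R v ≤ edgeDegree I v := by
    have h := edgeDegree_union_le (T \ R) I v
    rw [hdeg, ← sdiff_union_of_subset hRT, edgeDegree_union disjoint_sdiff_left,
      sdiff_union_of_subset hRT] at h
    exact Nat.le_of_add_le_add_left h
  have hsum : ∑ v, edgeDegree R v = ∑ v, edgeDegree I v := by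
    rw [sum_edgeDegree hR, sum_edgeDegree hI, hcard]
  ext v
  exact ((Finset.sum_eq_sum_iff_of_le fun v _ ↦ hle v).1 hsum v (Finset.mem_univ v)).symm

theorem exists_involutive_of_edgeDegree_eq_one {M : Set (Sym2 V)} (hM : ∀ e ∈ M, ¬ e.IsDiag)
    (hdeg : ∀ v, edgeDegree M v = 1) :
    ∃ f : V → V, Involutive f ∧ (∀ v, f v ≠ v) ∧ ∀ v w, s(v, w) ∈ M ↔ f v = w := by
  have hpartner (v : V) : ∃ w, ∀ x, s(v, x) ∈ M ↔ w = x := by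
    obtain ⟨e, he⟩ := ncard_eq_one.1 (hdeg v)
    obtain ⟨hmem, w, rfl⟩ : e ∈ M ∩ {e | v ∈ e} := he ▸ mem_singleton e
    refine ⟨w, fun x ↦ ⟨fun hx ↦ ?_, fun h ↦ h ▸ hmem⟩⟩
    have hx' : s(v, x) ∈ M ∩ {e | v ∈ e} := ⟨hx, Sym2.mem_mk_left v x⟩
    rw [he, mem_singleton_iff, Sym2.congr_right] at hx'
    exact hx'.symm
  choose f hf using hpartner
  exact ⟨f, fun v ↦ (hf _ _).1 (Sym2.eq_swap ▸ (hf v _).2 rfl),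
    fun v h ↦ hM _ ((hf v v).2 h) rfl, hf⟩

end EdgeDegree

section InvolutionPair

variable {X : Type*} {σ f : X → X}

-- Cancelling `σ` and `f` at both ends lowers `k` by two.
theorem apply_ne_iterate_comp (hσ : Involutive σ) (hf : Involutive f)
    (hσ_ne : ∀ x, σ x ≠ x) (hf_ne : ∀ x, f x ≠ x) (k : ℕ) (x : X) : f x ≠ (σ ∘ f)^[k] x := by
  induction k using Nat.twoStepInduction generalizing x with
  | zero => exact hf_ne x
  | one => exact (hσ_ne (f x)).symm
  | more k ih _ =>
    rw [iterate_succ_apply', comp_apply, Ne, ← hσ.eq_iff, ← hf.eq_iff]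
    exact ih (σ (f x))

theorem apply_iterate_comp_ne_iterate_comp (hσ : Involutive σ) (hf : Involutive f)
    (hσ_ne : ∀ x, σ x ≠ x) (hf_ne : ∀ x, f x ≠ x) (i j : ℕ) (x : X) :
    σ ((σ ∘ f)^[i] x) ≠ (σ ∘ f)^[j] x := by
  have hσ_iterate (k : ℕ) (y : X) : σ y ≠ (σ ∘ f)^[k] y := by
    cases k with
    | zero => exact hσ_ne y
    | succ k =>
      rw [iterate_succ_apply', comp_apply, hσ.injective.ne_iff, Ne, ← hf.eq_iff]
      exact apply_ne_iterate_comp hσ hf hσ_ne hf_ne k y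
  obtain h | h := le_total i j
  · rw [← Nat.sub_add_cancel h, iterate_add_apply]
    exact hσ_iterate _ _
  · rw [← Nat.sub_add_cancel h, iterate_add_apply, Ne, hσ.eq_iff, eq_comm]
    exact hσ_iterate _ _

theorem two_mul_minimalPeriod_comp [Finite X] (hσ : Involutive σ) (hf : Involutive f)
    (hσ_ne : ∀ x, σ x ≠ x) (hf_ne : ∀ x, f x ≠ x)
    (htrans : ∀ A : Set X, A.Nonempty → MapsTo σ A A → MapsTo f A A → A = univ) (x : X) :
    2 * minimalPeriod (σ ∘ f) x = Nat.card X := by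
  set p := minimalPeriod (σ ∘ f) x
  have hp : 0 < p := minimalPeriod_pos_of_mem_periodicPts
    ((hσ.injective.comp hf.injective).mem_periodicPts x)
  let orbit : Bool × Fin p → X := fun a ↦ (if a.1 then σ else id) ((σ ∘ f)^[a.2] x)
  have hmem (i : ℕ) : (σ ∘ f)^[i] x ∈ range orbit :=
    ⟨(false, ⟨_, Nat.mod_lt i hp⟩), iterate_mod_minimalPeriod_eq⟩
  have hmem_σ (i : ℕ) : σ ((σ ∘ f)^[i] x) ∈ range orbit :=
    ⟨(true, ⟨_, Nat.mod_lt i hp⟩), congrArg σ iterate_mod_minimalPeriod_eq⟩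
  have hsurj : range orbit = univ := by
    refine htrans _ ⟨x, hmem 0⟩ ?_ ?_
    · rintro _ ⟨⟨_ | _, i⟩, rfl⟩
      · exact hmem_σ i
      · exact (hσ _).symm ▸ hmem i
    · rintro _ ⟨⟨_ | _, i⟩, rfl⟩
      · have h := hmem_σ (i + 1)
        rw [iterate_succ_apply', comp_apply, hσ] at h
        exact h
      · have h : (σ ∘ f)^[i + (p - 1)] x = f (σ ((σ ∘ f)^[i] x)) := by
          rw [← hf.eq_iff, ← hσ.eq_iff, ← comp_apply (f := σ), ← iterate_succ_apply' (σ ∘ f),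
            Nat.succ_eq_add_one, add_assoc, Nat.sub_add_cancel hp, iterate_add_minimalPeriod_eq]
        exact h ▸ hmem _
  have hinj : Injective orbit := by
    have hne := apply_iterate_comp_ne_iterate_comp hσ hf hσ_ne hf_ne
    rintro ⟨_ | _, i⟩ ⟨_ | _, j⟩ h
    · exact congrArg _ (Fin.ext (iterate_injOn_Iio_minimalPeriod i.2 j.2 h))
    · exact absurd h.symm (hne j i x)
    · exact absurd h (hne i j x)
    · exact congrArg _ (Fin.ext (iterate_injOn_Iio_minimalPeriod i.2 j.2 (hσ.injective h)))
  rw [← Nat.card_eq_of_bijective orbit ⟨hinj, range_eq_univ.1 hsurj⟩]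
  simp

end InvolutionPair

section Labels

variable {r : Scheme}

/-- The index of the segment that has `x` as one of its two ends: `l` ends segment `l`, and
`l'` starts segment `l ⊕ 1`. -/
def labelSegment (x : Label) : ZMod 4 := if x.2 then x.1 + 1 else x.1

/-- The label at the other end of the segment with end `x`. -/
def segmentMate (x : Label) : Label := if x.2 then (x.1 + 1, false) else (x.1 - 1, true)

/-- The removal set in terms of labels: the four pairs `{l, l'}`. -/
def removedLabelPairs : Finset (Sym2 Label) :=
  Finset.univ.image fun l : ZMod 4 ↦ s((l, false), (l, true))

theorem segmentMate_involutive : Involutive segmentMate := by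
  unfold Involutive
  decide

theorem segmentMate_ne : ∀ x, segmentMate x ≠ x := by decide

theorem labelSegment_eq_iff :
    ∀ {x y}, labelSegment x = labelSegment y ↔ x = y ∨ x = segmentMate y := by decide

theorem labelSegment_segmentMate : ∀ x, labelSegment (segmentMate x) = labelSegment x := by decide

theorem mk_labelSegment_eq :
    ∀ x, (labelSegment x, false) = x ∨ (labelSegment x, false) = segmentMate x := by decide

theorem mk_labelSegment_mem_iff {A : Set Label} (hA : MapsTo segmentMate A A) {x : Label} :
    (labelSegment x, false) ∈ A ↔ x ∈ A := by
  obtain h | h := mk_labelSegment_eq x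
  · rw [h]
  · rw [h]
    exact ⟨fun hx ↦ segmentMate_involutive x ▸ hA hx, fun hx ↦ hA hx⟩

theorem card_filter_mem_removedLabelPairs :
    ∀ x, (removedLabelPairs.filter (x ∈ ·)).card = 1 := by decide +kernel

theorem card_removedLabelPairs : removedLabelPairs.card = 4 := by decide +kernel

theorem card_pure_schemes : (allSchemes.filter IsPure).card = 25 := by decide +kernel

theorem injOn_reins : InjOn reins allSchemes := by
  simp only [InjOn, Finset.mem_coe]
  decide +kernel

theorem card_reins (hr : r ∈ allSchemes) : (reins r).card = 4 := by
  revert r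
  decide +kernel

theorem card_filter_mem_reins (hr : r ∈ allSchemes) (x : Label) :
    ((reins r).filter (x ∈ ·)).card = 1 := by
  revert r x
  decide +kernel

theorem not_isDiag_map_labelSegment (hr : r ∈ allSchemes) :
    ∀ e ∈ reins r, ¬ (e.map labelSegment).IsDiag := by
  revert r
  decide +kernel

theorem isPure_iff_disjoint_reins (hr : r ∈ allSchemes) :
    IsPure r ↔ Disjoint (reins r) removedLabelPairs := by
  revert r
  decide +kernel

theorem segmentMate_exitL (hr : r ∈ allSchemes) :
    ∀ e ∈ [1, r.1, r.2.1, r.2.2], segmentMate (exitL e) = entryL e := by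
  revert r
  decide +kernel

theorem exists_labelSegment_exitL_eq (hr : r ∈ allSchemes) (l : ZMod 4) :
    ∃ e ∈ [1, r.1, r.2.1, r.2.2], labelSegment (exitL e) = l := by
  revert r l
  decide +kernel

theorem exists_scheme_of_nodup : ∀ x y z : Label,
    ([exitL 1, x, y, z].map labelSegment).Nodup →
      ∃ r ∈ allSchemes, exitL r.1 = x ∧ exitL r.2.1 = y ∧ exitL r.2.2 = z := by
  decide +kernel

theorem labelSegment_iterate_injOn {f : Label → Label} (hf : Involutive f) (hf_ne : ∀ x, f x ≠ x)
    (x : Label) : InjOn (fun i ↦ labelSegment ((segmentMate ∘ f)^[i] x))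
      (Iio (minimalPeriod (segmentMate ∘ f) x)) := by
  intro i hi j hj h
  obtain h | h := labelSegment_eq_iff.1 h
  · exact iterate_injOn_Iio_minimalPeriod hi hj h
  · exact absurd h.symm
      (apply_iterate_comp_ne_iterate_comp segmentMate_involutive hf segmentMate_ne hf_ne j i x)

-- Alternately crossing a segment and applying `f` visits the four segments in turn; the labels at
-- which the segments are left are the exits of the scheme.
theorem exists_scheme_of_minimalPeriod_eq {f : Label → Label} (hf : Involutive f)
    (hf_ne : ∀ x, f x ≠ x) (hperiod : minimalPeriod (segmentMate ∘ f) (exitL 1) = 4) :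
    ∃ r ∈ allSchemes, exitL r.1 = segmentMate (f (exitL 1)) ∧
      exitL r.2.1 = segmentMate (f (exitL r.1)) ∧
      exitL r.2.2 = segmentMate (f (exitL r.2.1)) ∧
      exitL 1 = segmentMate (f (exitL r.2.2)) := by
  set ρ := segmentMate ∘ f
  have hinj : InjOn (fun i ↦ labelSegment (ρ^[i] (exitL 1))) (Iio 4) :=
    (labelSegment_iterate_injOn hf hf_ne (exitL 1)).mono (Iio_subset_Iio hperiod.ge)
  have hnodup : ((List.range 4).map fun i ↦ labelSegment (ρ^[i] (exitL 1))).Nodup :=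
    List.Nodup.map_on (fun i hi j hj ↦ hinj (List.mem_range.1 hi) (List.mem_range.1 hj))
      List.nodup_range
  have hreturn : ρ^[4] (exitL 1) = exitL 1 := by
    rw [← hperiod, iterate_minimalPeriod]
  obtain ⟨r, hr, h₁, h₂, h₃⟩ := exists_scheme_of_nodup _ _ _ hnodup
  refine ⟨r, hr, ?_⟩
  rw [h₁, h₂, h₃]
  exact ⟨rfl, rfl, rfl, hreturn.symm⟩

theorem exists_reins_eq {M : Set (Sym2 Label)} (hM : ∀ e ∈ M, ¬ e.IsDiag)
    (hdeg : ∀ x, edgeDegree M x = 1)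
    (htrans : ∀ A : Set Label, A.Nonempty → MapsTo segmentMate A A →
      (∀ x y, s(x, y) ∈ M → x ∈ A → y ∈ A) → A = univ) :
    ∃ r ∈ allSchemes, (reins r : Set (Sym2 Label)) = M := by
  obtain ⟨f, hf, hf_ne, hfM⟩ := exists_involutive_of_edgeDegree_eq_one hM hdeg
  have hcard : M.ncard = 4 := by
    have h := two_mul_ncard_of_edgeDegree_eq_one hM hdeg
    rw [Nat.card_eq_fintype_card] at h
    exact Nat.eq_of_mul_eq_mul_left two_pos h
  have hperiod : minimalPeriod (segmentMate ∘ f) (exitL 1) = 4 := by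
    have h := two_mul_minimalPeriod_comp segmentMate_involutive hf segmentMate_ne hf_ne
      (fun A hne hσ hfA ↦ htrans A hne hσ fun x y hxy hx ↦ (hfM x y).1 hxy ▸ hfA hx) (exitL 1)
    rw [Nat.card_eq_fintype_card] at h
    exact Nat.eq_of_mul_eq_mul_left two_pos h
  obtain ⟨r, hr, h₁, h₂, h₃, h₄⟩ := exists_scheme_of_minimalPeriod_eq hf hf_ne hperiod
  have hedge (a b : ℤ) (hb : b ∈ [1, r.1, r.2.1, r.2.2])
      (h : exitL b = segmentMate (f (exitL a))) : s(exitL a, entryL b) ∈ M := by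
    rw [hfM, ← segmentMate_exitL hr b hb, h, segmentMate_involutive]
  have hsub : (reins r : Set (Sym2 Label)) ⊆ M := by
    intro e he
    simp only [reins, Finset.coe_insert, Finset.coe_singleton, mem_insert_iff,
      mem_singleton_iff] at he
    obtain rfl | rfl | rfl | rfl := he
    exacts [hedge _ _ (by simp) h₁, hedge _ _ (by simp) h₂, hedge _ _ (by simp) h₃,
      hedge _ _ (by simp) h₄]
  exact ⟨r, hr, eq_of_subset_of_ncard_le hsub (by rw [ncard_coe_finset, card_reins hr, hcard])⟩

end Labels

section Tour

variable {n : ℕ}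

theorem tourEdges_eq_range (n : ℕ) : tourEdges n = range fun v : ZMod n ↦ s(v, v + 1) :=
  Set.ext fun _ ↦ exists_congr fun _ ↦ eq_comm

theorem mk_add_one_injective (hn : 2 < n) : Injective fun v : ZMod n ↦ s(v, v + 1) := by
  intro v w h
  obtain ⟨h, -⟩ | ⟨h, h'⟩ := Sym2.eq_iff.1 h
  · exact h
  · have htwo : ((2 : ℕ) : ZMod n) = 0 := by
      push_cast
      linear_combination h' - h
    exact absurd (Nat.le_of_dvd two_pos ((ZMod.natCast_eq_zero_iff 2 n).1 htwo)) hn.not_ge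

theorem not_isDiag_of_mem_tourEdges (hn : 1 < n) : ∀ e ∈ tourEdges n, ¬ e.IsDiag := by
  have : Fact (1 < n) := ⟨hn⟩
  rintro _ ⟨v, rfl⟩ h
  exact one_ne_zero (left_eq_add.1 (Sym2.mk_isDiag_iff.1 h))

theorem edgeDegree_tourEdges (hn : 2 < n) (v : ZMod n) : edgeDegree (tourEdges n) v = 2 := by
  have : Fact (1 < n) := ⟨by lia⟩
  have hincident : tourEdges n ∩ {e | v ∈ e} = {s(v, v + 1), s(v - 1, v - 1 + 1)} := by
    ext e
    constructor
    · rintro ⟨⟨w, rfl⟩, hv⟩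
      obtain rfl | rfl := Sym2.mem_iff.1 hv
      · exact Or.inl rfl
      · exact Or.inr (by rw [add_sub_cancel_right]; rfl)
    · rintro (rfl | rfl)
      · exact ⟨⟨v, rfl⟩, Sym2.mem_mk_left _ _⟩
      · exact ⟨⟨v - 1, rfl⟩, by simp⟩
  rw [edgeDegree, hincident, ncard_pair ((mk_add_one_injective hn).ne ?_)]
  exact fun h ↦ one_ne_zero (sub_eq_self.1 h.symm)

end Tour

theorem segmentIndex_surjective : Surjective fun k : Fin 4 ↦ ((k : ℕ) : ZMod 4) + 1 := by
  unfold Surjective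
  decide

namespace CompleteSelection

variable {n : ℕ} (S : CompleteSelection n)

section
include S

theorem three_lt : 3 < n := by
  have := S.mono (show (0 : Fin 4) < 1 by decide)
  have := S.mono (show (1 : Fin 4) < 2 by decide)
  have := S.mono (show (2 : Fin 4) < 3 by decide)
  have := S.le
  lia

theorem neZero : NeZero n := ⟨by linarith [S.three_lt]⟩

end

theorem i_lt (k : Fin 4) : S.i k < n := by
  have := S.mono.monotone (show k ≤ 3 from Fin.le_last k)
  have := S.le
  have := S.three_lt
  lia

theorem val_cast (k : Fin 4) : (S.i k : ZMod n).val = S.i k :=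
  ZMod.val_cast_of_lt (S.i_lt k)

theorem cast_injective : Injective fun k ↦ (S.i k : ZMod n) := fun h k e ↦
  S.mono.injective <| by rw [← S.val_cast h, ← S.val_cast k]; exact congrArg ZMod.val e

theorem cast_add_one_ne_cast (h k : Fin 4) : (S.i h : ZMod n) + 1 ≠ S.i k := fun e ↦
  S.complete h k <| by
    rw [← ZMod.val_natCast, ← S.val_cast k, ← e, Nat.cast_add_one]

theorem instLabel_add_one (k : Fin 4) (b : Bool) :
    instLabel S ((k : ℕ) + 1, b) = S.i k + if b then 1 else 0 := by
  have hk : (⟨((k : ℕ) + 1 - 1 : ZMod 4).val, ZMod.val_lt _⟩ : Fin 4) = k :=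
    Fin.ext ((congrArg ZMod.val (add_sub_cancel_right _ 1)).trans (ZMod.val_natCast_of_lt k.2))
  rw [instLabel, hk]

theorem instLabel_true (l : ZMod 4) :
    instLabel S (l, true) = instLabel S (l, false) + 1 := by
  simp [instLabel]

theorem range_instLabel_false :
    (range fun l ↦ instLabel S (l, false)) = range fun k ↦ (S.i k : ZMod n) := by
  rw [← segmentIndex_surjective.range_comp]
  refine congrArg range (funext fun k ↦ ?_)
  simpa using S.instLabel_add_one k false

theorem instLabel_injective : Injective (instLabel S) := by
  rintro ⟨l, b⟩ ⟨m, c⟩ h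
  obtain ⟨k, rfl⟩ := segmentIndex_surjective l
  obtain ⟨j, rfl⟩ := segmentIndex_surjective m
  rw [instLabel_add_one, instLabel_add_one] at h
  cases b <;> cases c <;>
    simp only [if_true, if_false, Bool.false_eq_true, add_zero, add_left_inj] at h
  · rw [S.cast_injective h]
  · exact absurd h.symm (S.cast_add_one_ne_cast j k)
  · exact absurd h (S.cast_add_one_ne_cast k j)
  · rw [S.cast_injective h]

theorem coe_removalSet :
    (removalSet S : Set (Sym2 (ZMod n))) =
      (fun v ↦ s(v, v + 1)) '' range fun k ↦ (S.i k : ZMod n) := by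
  rw [removalSet, Finset.coe_image, Finset.coe_univ, image_univ, ← range_comp]
  rfl

theorem coe_removalSet_eq_image_map :
    (removalSet S : Set (Sym2 (ZMod n))) = Sym2.map (instLabel S) '' removedLabelPairs := by
  rw [coe_removalSet, ← range_instLabel_false, removedLabelPairs, Finset.coe_image,
    Finset.coe_univ, image_univ, ← range_comp, ← range_comp]
  refine congrArg range (funext fun l ↦ ?_)
  simp only [comp_apply, Sym2.map_mk, instLabel_true]

theorem tourEdges_sdiff_removalSet :
    tourEdges n \ removalSet S =
      (fun v ↦ s(v, v + 1)) '' (range fun k ↦ (S.i k : ZMod n))ᶜ := by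
  rw [tourEdges_eq_range, coe_removalSet,
    range_sdiff_image (mk_add_one_injective (by linarith [S.three_lt]))]

/-- The index `l` of the segment `i_{l-1} + 1, …, i_l` of the tour that contains `v`. Counting the
selected indices below `v` in `ZMod 4` identifies the vertices after the last one with those up to
the first one, which together form segment `1`. -/
def segmentOf (v : ZMod n) : ZMod 4 :=
  (Finset.univ.filter fun k ↦ S.i k < v.val).card + 1

theorem card_filter_i_lt_val_add_one (v : ZMod n) :
    (Finset.univ.filter fun k ↦ S.i k < v.val + 1).card =
      (Finset.univ.filter fun k ↦ S.i k < v.val).card +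
        (Finset.univ.filter fun k ↦ (S.i k : ZMod n) = v).card := by
  have := S.neZero
  have hval (k : Fin 4) : (S.i k : ZMod n) = v ↔ S.i k = v.val := by
    rw [← (ZMod.val_injective n).eq_iff, val_cast]
  simp only [hval, Nat.lt_succ_iff_lt_or_eq]
  rw [Finset.filter_or, Finset.card_union_of_disjoint]
  exact Finset.disjoint_filter.2 fun k _ hlt ↦ hlt.ne

-- In the step from `n - 1` to `0` the count drops by `4`, which is `0` in `ZMod 4`.
theorem segmentOf_add_one (v : ZMod n) :
    S.segmentOf (v + 1) =
      S.segmentOf v + (Finset.univ.filter fun k ↦ (S.i k : ZMod n) = v).card := by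
  have := S.neZero
  have : Fact (1 < n) := ⟨by linarith [S.three_lt]⟩
  suffices h : ((Finset.univ.filter fun k ↦ S.i k < (v + 1).val).card : ZMod 4) =
      (Finset.univ.filter fun k ↦ S.i k < v.val + 1).card by
    rw [segmentOf, h, card_filter_i_lt_val_add_one, segmentOf]
    push_cast
    ring
  obtain hv | hv := (Nat.succ_le_of_lt (ZMod.val_lt v)).lt_or_eq
  · rw [ZMod.val_add_of_lt (by rwa [ZMod.val_one]), ZMod.val_one]
  · have hzero : v + 1 = 0 := by
      rw [← ZMod.natCast_zmod_val v, ← Nat.cast_add_one]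
      exact (congrArg _ hv).trans (ZMod.natCast_self n)
    have hall : (Finset.univ.filter fun k ↦ S.i k < v.val + 1) = Finset.univ :=
      Finset.filter_true_of_mem fun k _ ↦ (S.i_lt k).trans_eq hv.symm
    rw [hall, hzero]
    simp only [ZMod.val_zero, not_lt_zero, Finset.filter_false, Finset.card_empty]
    decide

theorem segmentOf_add_one_of_notMem {v : ZMod n} (hv : v ∉ range fun k ↦ (S.i k : ZMod n)) :
    S.segmentOf (v + 1) = S.segmentOf v := by
  rw [segmentOf_add_one, Finset.filter_false_of_mem fun k _ h ↦ hv ⟨k, h⟩, Finset.card_empty,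
    Nat.cast_zero, add_zero]

theorem segmentOf_cast (k : Fin 4) : S.segmentOf (S.i k) = (k : ℕ) + 1 := by
  have hbelow : (Finset.univ.filter fun j ↦ S.i j < S.i k) = Finset.Iio k := by
    ext j
    simp [S.mono.lt_iff_lt]
  rw [segmentOf, S.val_cast, hbelow, Fin.card_Iio]

theorem segmentOf_instLabel (x : Label) : S.segmentOf (instLabel S x) = labelSegment x := by
  obtain ⟨l, b⟩ := x
  obtain ⟨k, rfl⟩ := segmentIndex_surjective l
  rw [instLabel_add_one]
  cases b
  · simpa [labelSegment] using S.segmentOf_cast k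
  · have hcut : (Finset.univ.filter fun j ↦ (S.i j : ZMod n) = S.i k) = {k} := by
      ext j
      rw [Finset.mem_filter_univ, Finset.mem_singleton]
      exact S.cast_injective.eq_iff
    simp [labelSegment, segmentOf_add_one, S.segmentOf_cast, hcut]

theorem instLabel_segmentOf {v : ZMod n} (hv : v ∈ range fun k ↦ (S.i k : ZMod n)) :
    instLabel S (S.segmentOf v, false) = v := by
  obtain ⟨k, rfl⟩ := hv
  simpa [segmentOf_cast] using S.instLabel_add_one k false

theorem reachable_instLabel_segmentOf (v : ZMod n) :
    (SimpleGraph.fromEdgeSet (tourEdges n \ removalSet S)).Reachable v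
      (instLabel S (S.segmentOf v, false)) := by
  have := S.neZero
  have hwalk (d : ℕ) (v : ZMod n) (hd : v + d = S.i 0) :
      (SimpleGraph.fromEdgeSet (tourEdges n \ removalSet S)).Reachable v
        (instLabel S (S.segmentOf v, false)) := by
    induction d generalizing v with
    | zero => rw [S.instLabel_segmentOf ⟨0, by simpa using hd.symm⟩]
    | succ d ih =>
      by_cases hv : v ∈ range fun k ↦ (S.i k : ZMod n)
      · rw [S.instLabel_segmentOf hv]
      · rw [← S.segmentOf_add_one_of_notMem hv]
        refine SimpleGraph.Reachable.trans (SimpleGraph.Adj.reachable ?_)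
          (ih (v + 1) (by rw [← hd]; push_cast; ring))
        have hmem : s(v, v + 1) ∈ tourEdges n \ removalSet S := by
          rw [tourEdges_sdiff_removalSet]
          exact ⟨v, hv, rfl⟩
        exact (SimpleGraph.fromEdgeSet_adj _).2 ⟨hmem, not_isDiag_of_mem_tourEdges
          (by linarith [S.three_lt]) _ hmem.1⟩
  exact hwalk ((S.i 0 : ZMod n) - v).val v (by rw [ZMod.natCast_zmod_val, add_sub_cancel])

/-- The edge set that results from replacing the removal set of `S` in the tour by `I`. -/
abbrev exchange (I : Set (Sym2 (ZMod n))) : Set (Sym2 (ZMod n)) :=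
  (tourEdges n \ removalSet S) ∪ I

variable {S} {r : Scheme}

theorem segmentOf_eq_of_mem {v w : ZMod n} (h : s(v, w) ∈ tourEdges n \ removalSet S) :
    S.segmentOf v = S.segmentOf w := by
  rw [tourEdges_sdiff_removalSet] at h
  obtain ⟨u, hu, h⟩ := h
  obtain ⟨rfl, rfl⟩ | ⟨rfl, rfl⟩ := Sym2.eq_iff.1 h
  · exact (S.segmentOf_add_one_of_notMem hu).symm
  · exact S.segmentOf_add_one_of_notMem hu

theorem removalSet_subset_tourEdges : (removalSet S : Set (Sym2 (ZMod n))) ⊆ tourEdges n := by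
  rw [coe_removalSet, tourEdges_eq_range]
  exact image_subset_range _ _

theorem coe_instReins :
    (instReins S r : Set (Sym2 (ZMod n))) = Sym2.map (instLabel S) '' reins r :=
  Finset.coe_image

theorem card_instReins (hr : r ∈ allSchemes) : (instReins S r).card = 4 :=
  (Finset.card_image_of_injective _ (Sym2.map.injective S.instLabel_injective)).trans
    (card_reins hr)

theorem not_isDiag_map_segmentOf (hr : r ∈ allSchemes) :
    ∀ e ∈ instReins S r, ¬ (e.map S.segmentOf).IsDiag := by
  simp only [instReins, Finset.forall_mem_image]
  intro e he
  rw [Sym2.map_map, show S.segmentOf ∘ instLabel S = labelSegment from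
    funext S.segmentOf_instLabel]
  exact not_isDiag_map_labelSegment hr e he

theorem not_isDiag_of_mem_instReins (hr : r ∈ allSchemes) :
    ∀ e ∈ instReins S r, ¬ e.IsDiag :=
  fun e he hdiag ↦ not_isDiag_map_segmentOf hr e he (hdiag.map)

theorem disjoint_sdiff_removalSet_instReins (hr : r ∈ allSchemes) :
    Disjoint (tourEdges n \ removalSet S) (instReins S r : Set (Sym2 (ZMod n))) := by
  rw [disjoint_left]
  rintro ⟨v, w⟩ hkept he
  exact not_isDiag_map_segmentOf hr _ he (segmentOf_eq_of_mem hkept)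

theorem edgeDegree_instReins (hr : r ∈ allSchemes) :
    edgeDegree (instReins S r : Set (Sym2 (ZMod n))) = edgeDegree (removalSet S) := by
  have := S.neZero
  rw [coe_instReins, coe_removalSet_eq_image_map]
  refine edgeDegree_image_congr S.instLabel_injective (funext fun x ↦ ?_)
  rw [edgeDegree_coe, edgeDegree_coe, card_filter_mem_reins hr, card_filter_mem_removedLabelPairs]

theorem not_isDiag_of_mem_exchange {I : Set (Sym2 (ZMod n))} (hI : ∀ e ∈ I, ¬ e.IsDiag) :
    ∀ e ∈ S.exchange I, ¬ e.IsDiag :=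
  fun e he ↦ he.elim (fun h ↦ not_isDiag_of_mem_tourEdges (by linarith [S.three_lt]) e h.1) (hI e)

theorem connected_exchange_instReins (hr : r ∈ allSchemes) :
    (SimpleGraph.fromEdgeSet (S.exchange (instReins S r))).Connected := by
  set G := SimpleGraph.fromEdgeSet (S.exchange (instReins S r))
  have hend (v : ZMod n) : G.Reachable v (instLabel S (S.segmentOf v, false)) :=
    (S.reachable_instLabel_segmentOf v).mono (SimpleGraph.fromEdgeSet_mono subset_union_left)
  have hcross (x y : Label) (h : labelSegment x = labelSegment y) :
      G.Reachable (instLabel S x) (instLabel S y) := by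
    have hx := hend (instLabel S x)
    rw [segmentOf_instLabel, h, ← segmentOf_instLabel] at hx
    exact hx.trans (hend _).symm
  have hnext (a b : ℤ) (hb : b ∈ [1, r.1, r.2.1, r.2.2]) (h : s(exitL a, entryL b) ∈ reins r) :
      G.Reachable (instLabel S (exitL a)) (instLabel S (exitL b)) := by
    have hmem : s(instLabel S (exitL a), instLabel S (entryL b)) ∈ instReins S r :=
      Finset.mem_image_of_mem _ h
    have hadj : G.Adj (instLabel S (exitL a)) (instLabel S (entryL b)) :=
      (SimpleGraph.fromEdgeSet_adj _).2 ⟨Or.inr hmem, not_isDiag_of_mem_instReins hr _ hmem⟩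
    refine hadj.reachable.trans (hcross _ _ ?_)
    rw [← segmentMate_exitL hr b hb, labelSegment_segmentMate]
  have h₁ := hnext 1 r.1 (by simp) (by simp [reins])
  have h₂ := h₁.trans (hnext r.1 r.2.1 (by simp) (by simp [reins]))
  have h₃ := h₂.trans (hnext r.2.1 r.2.2 (by simp) (by simp [reins]))
  have hroot (v : ZMod n) : G.Reachable (instLabel S (exitL 1)) v := by
    obtain ⟨e, he, hseg⟩ := exists_labelSegment_exitL_eq hr (S.segmentOf v)
    have hexit : G.Reachable (instLabel S (exitL 1)) (instLabel S (exitL e)) := by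
      simp only [List.mem_cons, List.not_mem_nil, or_false] at he
      obtain rfl | rfl | rfl | rfl := he
      exacts [.rfl, h₁, h₂, h₃]
    exact (hexit.trans (hcross _ (S.segmentOf v, false) hseg)).trans (hend v).symm
  exact ⟨fun v w ↦ (hroot v).symm.trans (hroot w)⟩

theorem isHamCycleGraph_exchange_instReins (hr : r ∈ allSchemes) :
    IsHamCycleGraph (SimpleGraph.fromEdgeSet (S.exchange (instReins S r))) := by
  have := S.neZero
  rw [isHamCycleGraph_fromEdgeSet_iff
    (not_isDiag_of_mem_exchange (not_isDiag_of_mem_instReins hr))]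
  refine ⟨connected_exchange_instReins hr, fun v ↦ ?_⟩
  rw [edgeDegree_exchange removalSet_subset_tourEdges (disjoint_sdiff_removalSet_instReins hr)
    (edgeDegree_instReins hr), edgeDegree_tourEdges (by linarith [S.three_lt])]

theorem eq_univ_of_preconnected_exchange {M : Set (Sym2 Label)}
    (hconn : (SimpleGraph.fromEdgeSet (S.exchange (Sym2.map (instLabel S) '' M))).Preconnected)
    {A : Set Label} (hne : A.Nonempty) (hmate : MapsTo segmentMate A A)
    (hM : ∀ x y, s(x, y) ∈ M → x ∈ A → y ∈ A) : A = univ := by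
  have hlabel (x : Label) : (S.segmentOf (instLabel S x), false) ∈ A ↔ x ∈ A := by
    rw [segmentOf_instLabel, mk_labelSegment_mem_iff hmate]
  have huniv : {v | (S.segmentOf v, false) ∈ A} = univ := by
    obtain ⟨x, hx⟩ := hne
    refine eq_univ_of_preconnected hconn ⟨instLabel S x, (hlabel x).2 hx⟩ fun v w hadj hv ↦ ?_
    obtain hkept | ⟨⟨a, b⟩, hab, h⟩ := ((SimpleGraph.fromEdgeSet_adj _).1 hadj).1
    · rwa [mem_ofPred_eq, ← segmentOf_eq_of_mem hkept]
    · obtain ⟨rfl, rfl⟩ | ⟨rfl, rfl⟩ := Sym2.eq_iff.1 h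
      · exact (hlabel b).2 (hM a b hab ((hlabel a).1 hv))
      · exact (hlabel a).2 (hM b a (Sym2.eq_swap ▸ hab) ((hlabel b).1 hv))
  exact eq_univ_of_forall fun x ↦ (hlabel x).1 (huniv.ge (mem_univ (instLabel S x)))

theorem ncard_removalSet : (removalSet S : Set (Sym2 (ZMod n))).ncard = 4 := by
  rw [coe_removalSet_eq_image_map,
    ncard_image_of_injective _ (Sym2.map.injective S.instLabel_injective), ncard_coe_finset,
    card_removedLabelPairs]

theorem edgeDegree_removalSet_instLabel (x : Label) :
    edgeDegree (removalSet S : Set (Sym2 (ZMod n))) (instLabel S x) = 1 := by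
  rw [coe_removalSet_eq_image_map, edgeDegree_image S.instLabel_injective, edgeDegree_coe,
    card_filter_mem_removedLabelPairs]

theorem subset_range_map_instLabel {I : Set (Sym2 (ZMod n))}
    (hdeg : edgeDegree I = edgeDegree (removalSet S)) : I ⊆ range (Sym2.map (instLabel S)) := by
  have := S.neZero
  refine subset_range_map_of_edgeDegree_eq_zero fun w hw ↦ ?_
  rw [hdeg, coe_removalSet_eq_image_map, edgeDegree_image_of_notMem_range _ hw]

theorem exists_instReins_eq {I : Finset (Sym2 (ZMod n))} (hcard : I.card = 4)
    (hI : ∀ e ∈ I, ¬ e.IsDiag)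
    (hham : IsHamCycleGraph (SimpleGraph.fromEdgeSet (S.exchange I))) :
    ∃ r ∈ allSchemes, instReins S r = I := by
  have := S.neZero
  obtain ⟨hconn, hdeg⟩ := (isHamCycleGraph_fromEdgeSet_iff (not_isDiag_of_mem_exchange hI)).1 hham
  have hdegI : edgeDegree (I : Set (Sym2 (ZMod n))) = edgeDegree (removalSet S) :=
    edgeDegree_eq_of_exchange removalSet_subset_tourEdges
      (fun e he ↦ not_isDiag_of_mem_tourEdges (by linarith [S.three_lt]) e
        (removalSet_subset_tourEdges he)) hI (by rw [ncard_coe_finset, hcard, ncard_removalSet])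
      (funext fun v ↦ (hdeg v).trans (edgeDegree_tourEdges (by linarith [S.three_lt]) v).symm)
  obtain ⟨M, hM⟩ := subset_range_iff_exists_image_eq.1 (subset_range_map_instLabel hdegI)
  rw [← hM] at hconn hdegI
  obtain ⟨r, hr, rfl⟩ := exists_reins_eq (M := M)
    (fun e he hdiag ↦ hI _ (hM.subset (mem_image_of_mem _ he)) hdiag.map)
    (fun x ↦ by
      rw [← edgeDegree_image S.instLabel_injective, hdegI, edgeDegree_removalSet_instLabel])
    (fun A ↦ eq_univ_of_preconnected_exchange hconn.preconnected)
  exact ⟨r, hr, Finset.coe_injective (coe_instReins.trans hM)⟩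

theorem disjoint_instReins_removalSet_iff (hr : r ∈ allSchemes) :
    Disjoint (instReins S r) (removalSet S) ↔ IsPure r := by
  rw [← Finset.disjoint_coe, coe_instReins, coe_removalSet_eq_image_map,
    disjoint_image_iff (Sym2.map.injective S.instLabel_injective), Finset.disjoint_coe,
    isPure_iff_disjoint_reins hr]

theorem injOn_instReins : InjOn (instReins S) allSchemes :=
  (Finset.image_injective (Sym2.map.injective S.instLabel_injective)).comp_injOn injOn_reins

end CompleteSelection

/-- For every `n ≥ 8` and every complete selection `S`, there are exactly 25 sets
`I` of 4 unordered pairs of distinct vertices, disjoint from `R(S)`, such that the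
graph with edge set `(E(T) \ R(S)) ∪ I` is a Hamiltonian cycle. -/
theorem twentyfive_reinsertion_sets (n : ℕ) (hn : 8 ≤ n) (S : CompleteSelection n) :
    {I : Finset (Sym2 (ZMod n)) |
        I.card = 4 ∧ (∀ e ∈ I, ¬ e.IsDiag) ∧ Disjoint I (removalSet S) ∧
        IsHamCycleGraph (SimpleGraph.fromEdgeSet
          ((tourEdges n \ ↑(removalSet S)) ∪ ↑I))}.ncard = 25 := by
  have hsets : {I : Finset (Sym2 (ZMod n)) |
      I.card = 4 ∧ (∀ e ∈ I, ¬ e.IsDiag) ∧ Disjoint I (removalSet S) ∧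
      IsHamCycleGraph (SimpleGraph.fromEdgeSet (S.exchange I))} =
      instReins S '' allSchemes.filter IsPure := by
    ext I
    simp only [Finset.coe_filter, mem_image, mem_ofPred_eq]
    constructor
    · rintro ⟨hcard, hI, hdisj, hham⟩
      obtain ⟨r, hr, rfl⟩ := CompleteSelection.exists_instReins_eq hcard hI hham
      exact ⟨r, ⟨hr, (CompleteSelection.disjoint_instReins_removalSet_iff hr).1 hdisj⟩, rfl⟩
    · rintro ⟨r, ⟨hr, hpure⟩, rfl⟩
      exact ⟨CompleteSelection.card_instReins hr, CompleteSelection.not_isDiag_of_mem_instReins hr,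
        (CompleteSelection.disjoint_instReins_removalSet_iff hr).2 hpure,
        CompleteSelection.isHamCycleGraph_exchange_instReins hr⟩
  have hinj : InjOn (instReins S) (allSchemes.filter IsPure) :=
    CompleteSelection.injOn_instReins.mono (Finset.coe_subset.2 (Finset.filter_subset _ _))
  rw [hsets, hinj.ncard_image, ncard_coe_finset, card_pure_schemes]
end
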